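/- arXiv:2111.12035 — 4 statements merged into one kernel-verified Lean document; each statement's English description precedes it below -/
import Mathlib

section
/- Let c > 0 and, for t > 0, let F_t denote the Borel measure on ℝ³ given by F_t = σ_{ct} / (4π c² t), where σ_R is the surface measure of the sphere of center 0 and radius R in ℝ³. Then for all t, t' > 0 the convolution F_t ∗ F_{t'} is absolutely continuous with respect to Lebesgue measure on ℝ³, with density h ↦ (1/(8π c² |h|)) · 1_{[c|t−t'|, c(t+t')]}(|h|); that is, for every Borel set A ⊆ ℝ³, (F_t ∗ F_{t'})(A) = ∫_A (1/(8π c² |h|)) 1_{[c|t−t'|, c(t+t')]}(|h|) dh. -/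
open MeasureTheory Real
open scoped MeasureTheory

/-- The surface measure on the unit sphere `S² ⊂ ℝ³` (total mass `4π`). -/
noncomputable def sphMeas : Measure (Metric.sphere (0 : EuclideanSpace ℝ (Fin 3)) 1) :=
  (volume : Measure (EuclideanSpace ℝ (Fin 3))).toSphere

/-- The surface measure `σ_R` of the sphere of center `0` and radius `R` in `ℝ³`
(total mass `4πR²`), viewed as a measure on `ℝ³`. -/
noncomputable def sphereSurf (R : ℝ) : Measure (EuclideanSpace ℝ (Fin 3)) :=
  ENNReal.ofReal (R ^ 2) •
    Measure.map (fun γ : Metric.sphere (0 : EuclideanSpace ℝ (Fin 3)) 1 =>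
      R • (γ : EuclideanSpace ℝ (Fin 3))) sphMeas

/-- The measure `F_t = σ_{ct} / (4π c² t)` on `ℝ³`, for `t > 0`. -/
noncomputable def Fmeas (c t : ℝ) : Measure (EuclideanSpace ℝ (Fin 3)) :=
  ENNReal.ofReal (1 / (4 * π * c ^ 2 * t)) • sphereSurf (c * t)

instance sphMeas_finite : IsFiniteMeasure sphMeas := by unfold sphMeas; infer_instance

lemma vol_Ioi {F : Type*} [NormedAddCommGroup F] [NormedSpace ℝ F] (h : ℝ → F) :
    ∫ r : Set.Ioi (0:ℝ), h r ∂(Measure.volumeIoiPow 2) = ∫ r in Set.Ioi (0:ℝ), r ^ 2 • h r := by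
  rw [Measure.volumeIoiPow, integral_withDensity_eq_integral_toReal_smul (by fun_prop) (by simp),
    ← integral_subtype_comap measurableSet_Ioi (fun r : ℝ => r ^ 2 • h r)]
  congr 1
  ext r
  rw [ENNReal.toReal_ofReal (by positivity)]

lemma polar {F : Type*} [NormedAddCommGroup F] [NormedSpace ℝ F]
    (f : EuclideanSpace ℝ (Fin 3) → F) :
    ∫ x, f x = ∫ p : Metric.sphere (0 : EuclideanSpace ℝ (Fin 3)) 1 × Set.Ioi (0:ℝ),
      f ((p.2 : ℝ) • (p.1 : EuclideanSpace ℝ (Fin 3))) ∂(sphMeas.prod (Measure.volumeIoiPow 2)) := by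
  have h := (volume : Measure (EuclideanSpace ℝ (Fin 3))).measurePreserving_homeomorphUnitSphereProd
  rw [show Module.finrank ℝ (EuclideanSpace ℝ (Fin 3)) - 1 = 2 by simp] at h
  rw [sphMeas, ← h.integral_comp (Homeomorph.measurableEmbedding _),
    ← restrict_compl_singleton (μ := volume) (0 : EuclideanSpace ℝ (Fin 3)),
    ← integral_subtype_comap (by measurability)]
  congr 1
  · rw [restrict_compl_singleton]
  ext x
  congr 1
  have : (x : EuclideanSpace ℝ (Fin 3)) ≠ 0 := x.2
  simp [smul_smul, this]

lemma polar_integrable {F : Type*} [NormedAddCommGroup F] [NormedSpace ℝ F]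
    (f : EuclideanSpace ℝ (Fin 3) → F) (hf : Integrable f) :
    Integrable (fun p : Metric.sphere (0 : EuclideanSpace ℝ (Fin 3)) 1 × Set.Ioi (0:ℝ) =>
      f ((p.2 : ℝ) • (p.1 : EuclideanSpace ℝ (Fin 3)))) (sphMeas.prod (Measure.volumeIoiPow 2)) := by
  have h := (volume : Measure (EuclideanSpace ℝ (Fin 3))).measurePreserving_homeomorphUnitSphereProd
  rw [show Module.finrank ℝ (EuclideanSpace ℝ (Fin 3)) - 1 = 2 by simp] at h
  rw [sphMeas, ← h.integrable_comp_emb (Homeomorph.measurableEmbedding _)]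
  have h2 : Integrable (fun x : ({0}ᶜ : Set (EuclideanSpace ℝ (Fin 3))) => f x) (Measure.comap Subtype.val volume) := by
    have := (integrableOn_iff_comap_subtypeVal (μ := volume) (f := f)
      (s := ({0}ᶜ : Set (EuclideanSpace ℝ (Fin 3)))) (by measurability)).1 hf.integrableOn
    exact this
  convert h2 using 1
  ext x
  have : (x : EuclideanSpace ℝ (Fin 3)) ≠ 0 := x.2
  simp [smul_smul, this]

lemma polar_iter (f : EuclideanSpace ℝ (Fin 3) → ℂ) (hf : Integrable f) :
    ∫ x, f x = ∫ r in Set.Ioi (0:ℝ), r ^ 2 •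
      ∫ γ, f (r • (γ : EuclideanSpace ℝ (Fin 3))) ∂sphMeas := by
  rw [polar, integral_prod_symm _ (polar_integrable f hf)]
  exact vol_Ioi (fun r => ∫ γ, f (r • (γ : EuclideanSpace ℝ (Fin 3))) ∂sphMeas)

lemma gauss_half (n : ℕ) :
    ∫ r in Set.Ioi (0:ℝ), r ^ n * exp (-r ^ 2) = (1 / 2) * Gamma ((n + 1) / 2) := by
  have := integral_rpow_mul_exp_neg_rpow (p := 2) (q := n) (by norm_num)
    (by have : (0:ℝ) ≤ n := n.cast_nonneg
        linarith)
  simpa using this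

lemma gauss_even (k : ℕ) :
    ∫ x : ℝ, x ^ (2 * k) * exp (-x ^ 2) = Gamma (k + 1 / 2) := by
  have := integral_comp_abs (f := fun x => x ^ (2 * k) * exp (-x ^ 2))
  simp only [sq_abs, pow_mul] at this
  simp only [pow_mul]
  rw [this]
  simp only [← pow_mul]
  rw [gauss_half]
  push_cast
  rw [show (2 * (k:ℝ) + 1) / 2 = k + 1 / 2 by ring]
  ring

lemma gauss_odd (n : ℕ) (hn : Odd n) : ∫ x : ℝ, x ^ n * exp (-x ^ 2) = 0 := by
  have := integral_neg_eq_self (fun x : ℝ => x ^ n * exp (-x ^ 2)) volume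
  simp only [hn.neg_pow, even_two.neg_pow, neg_mul, integral_neg] at this
  linarith

lemma gauss_dir (e : EuclideanSpace ℝ (Fin 3)) (he : ‖e‖ = 1) (n : ℕ) :
    ∫ x : EuclideanSpace ℝ (Fin 3), (inner ℝ x e) ^ n * exp (-‖x‖ ^ 2) =
      (∫ x : ℝ, x ^ n * exp (-x ^ 2)) * π := by
  obtain ⟨b, hb⟩ := Orthonormal.exists_orthonormalBasis_extension_of_card_eq (𝕜 := ℝ)
    (E := EuclideanSpace ℝ (Fin 3)) (ι := Fin 3) (by simp) (v := fun _ => e) (s := {0}) (by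
      constructor
      · intro i; simpa using he
      · intro i j hij; exact absurd (Subsingleton.elim i j) hij)
  have hb0 : b 0 = e := hb 0 rfl
  have h1 := (b.measurePreserving_repr_symm.comp (PiLp.volume_preserving_toLp (Fin 3)))
  have hme : MeasurableEmbedding (b.repr.symm ∘ WithLp.toLp 2 : (Fin 3 → ℝ) → EuclideanSpace ℝ (Fin 3)) := by
    apply MeasurableEmbedding.comp
    · exact b.repr.symm.toHomeomorph.measurableEmbedding
    · exact (MeasurableEquiv.toLp 2 (Fin 3 → ℝ)).measurableEmbedding
  rw [← h1.integral_comp hme]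
  have key : ∀ x : Fin 3 → ℝ,
      (inner ℝ ((b.repr.symm ∘ WithLp.toLp 2) x) e) ^ n * exp (-‖(b.repr.symm ∘ WithLp.toLp 2) x‖ ^ 2)
      = ∏ i, (![fun y : ℝ => y ^ n * exp (-y ^ 2), fun y => exp (-y ^ 2), fun y => exp (-y ^ 2)] i) (x i) := by
    intro x
    have a1 : inner ℝ ((b.repr.symm ∘ WithLp.toLp 2) x) e = x 0 := by
      rw [real_inner_comm, ← hb0, ← b.repr_apply_apply]
      simp
    rw [a1]
    simp only [Function.comp, LinearIsometryEquiv.norm_map, EuclideanSpace.norm_sq_eq, Fin.sum_univ_three, Fin.prod_univ_three]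
    simp [exp_add, add_comm, mul_assoc]
  simp only [key]
  rw [integral_fintype_prod_volume_eq_prod]
  simp only [Fin.prod_univ_three]
  have g := integral_gaussian 1
  simp at g
  simp [g, mul_assoc, Real.mul_self_sqrt Real.pi_pos.le]

lemma sph_moment (e : EuclideanSpace ℝ (Fin 3)) (he : ‖e‖ = 1) (n : ℕ) :
    ∫ γ, (inner ℝ (γ : EuclideanSpace ℝ (Fin 3)) e) ^ n ∂sphMeas =
      2 * π * ∫ x in (-1:ℝ)..1, x ^ n := by
  have h := gauss_dir e he n
  rw [polar] at h
  have key : ∀ p : Metric.sphere (0 : EuclideanSpace ℝ (Fin 3)) 1 × Set.Ioi (0:ℝ),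
     inner ℝ ((p.2 : ℝ) • (p.1 : EuclideanSpace ℝ (Fin 3))) e ^ n * rexp (-‖(p.2 : ℝ) • (p.1 : EuclideanSpace ℝ (Fin 3))‖ ^ 2)
     = (inner ℝ (p.1 : EuclideanSpace ℝ (Fin 3)) e) ^ n * ((p.2 : ℝ) ^ n * exp (- (p.2:ℝ) ^ 2)) := by
    intro p
    simp [inner_smul_left, norm_smul, mul_pow]
    ring
  simp only [key] at h
  rw [integral_prod_mul (fun γ : Metric.sphere (0 : EuclideanSpace ℝ (Fin 3)) 1 => (inner ℝ (γ : EuclideanSpace ℝ (Fin 3)) e) ^ n)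
    (fun r : Set.Ioi (0:ℝ) => (r:ℝ) ^ n * exp (-(r:ℝ) ^ 2)), vol_Ioi (fun r => r ^ n * exp (-r ^ 2))] at h
  simp only [smul_eq_mul, ← mul_assoc, ← pow_add] at h
  rw [gauss_half] at h
  have hG : 0 < Gamma (((2 + n : ℕ) + 1 : ℝ) / 2) := Gamma_pos_of_pos (by positivity)
  rw [integral_pow]
  rcases Nat.even_or_odd n with hn | hn
  · obtain ⟨k, rfl⟩ := hn.two_dvd
    rw [gauss_even] at h
    have e1 : (((2 + 2 * k : ℕ) + 1 : ℝ) / 2) = (k + 1 / 2) + 1 := by push_cast; ring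
    have hk : (0:ℝ) < k + 1 / 2 := by positivity
    rw [e1, Gamma_add_one hk.ne'] at h
    have hG2 := Gamma_pos_of_pos hk
    have h3 : (-1:ℝ) ^ (2 * k + 1) = -1 := Odd.neg_one_pow ⟨k, rfl⟩
    rw [h3]
    push_cast
    have : (∫ γ, (inner ℝ (γ : EuclideanSpace ℝ (Fin 3)) e) ^ (2 * k) ∂sphMeas) * (k + 1 / 2) = 2 * π := by
      apply mul_right_cancel₀ hG2.ne'
      linarith
    have h5 : (2 * (k:ℝ) + 1) ≠ 0 := by positivity
    simp only [one_pow]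
    field_simp
    linarith
  · rw [gauss_odd n hn] at h
    rw [Even.neg_one_pow hn.add_one]
    simp only [one_pow, sub_self, zero_div, mul_zero]
    have : (1 / 2 * Gamma (((2 + n : ℕ) + 1 : ℝ) / 2)) ≠ 0 := by positivity
    rw [zero_mul] at h
    exact (mul_eq_zero.1 h).resolve_right this

lemma hasSum_exp_aux {α : Type*} [MeasurableSpace α] (μ : Measure α) [IsFiniteMeasure μ]
    (f : α → ℝ) (hf : Measurable f) (hb : ∀ᵐ x ∂μ, |f x| ≤ 1) (s : ℝ) :
    HasSum (fun n : ℕ => ((s * Complex.I) ^ n / n.factorial) * ((∫ x, f x ^ n ∂μ : ℝ) : ℂ))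
      (∫ x, Complex.exp ((s * f x : ℝ) * Complex.I) ∂μ) := by
  have hInt : ∀ n : ℕ, Integrable (fun x => ((s * Complex.I) ^ n / n.factorial) * ((f x ^ n : ℝ) : ℂ)) μ := by
    intro n
    apply Integrable.const_mul
    refine Integrable.ofReal (f := fun x => f x ^ n) ?_
    refine Integrable.of_bound (hf.pow_const n).aestronglyMeasurable 1 ?_
    filter_upwards [hb] with x hx
    rw [norm_pow]
    exact pow_le_one₀ (norm_nonneg _) hx
  have := hasSum_integral_of_summable_integral_norm hInt ?_
  · have e1 : ∀ n : ℕ, ∫ x, ((s * Complex.I) ^ n / n.factorial) * ((f x ^ n : ℝ) : ℂ) ∂μ =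
        ((s * Complex.I) ^ n / n.factorial) * ((∫ x, f x ^ n ∂μ : ℝ) : ℂ) := by
      intro n
      rw [integral_const_mul, integral_complex_ofReal]
    have e2 : ∀ x, ∑' n : ℕ, ((s * Complex.I) ^ n / n.factorial) * ((f x ^ n : ℝ) : ℂ) =
        Complex.exp ((s * f x : ℝ) * Complex.I) := by
      intro x
      rw [Complex.exp_eq_exp_ℂ, NormedSpace.exp_eq_tsum_div]
      congr 1
      ext n
      push_cast
      ring
    simpa only [e1, e2] using this
  · refine Summable.of_nonneg_of_le (fun n => integral_nonneg fun x => norm_nonneg _) (f := fun n => |s| ^ n / n.factorial * μ.real Set.univ) ?_ ?_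
    · intro n
      calc _ ≤ ∫ x, |s| ^ n / n.factorial ∂μ := by
            apply integral_mono_ae (hInt n).norm (integrable_const _)
            filter_upwards [hb] with x hx
            simp only [norm_mul, norm_div, norm_pow, Complex.norm_real, Complex.norm_I, mul_one, Complex.norm_natCast, Real.norm_eq_abs, Complex.ofReal_pow]
            exact mul_le_of_le_one_right (by positivity) (pow_le_one₀ (abs_nonneg _) hx)
        _ = _ := by simp [mul_comm]
    · exact (Real.summable_pow_div_factorial _).mul_right _

lemma sph_exp_unit (e : EuclideanSpace ℝ (Fin 3)) (he : ‖e‖ = 1) (s : ℝ) :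
    ∫ γ, Complex.exp ((s * inner ℝ (γ : EuclideanSpace ℝ (Fin 3)) e : ℝ) * Complex.I) ∂sphMeas =
      4 * π * sinc s := by
  have h1 := hasSum_exp_aux sphMeas (fun γ => inner ℝ (γ : EuclideanSpace ℝ (Fin 3)) e) (by fun_prop)
    (by
      refine Filter.Eventually.of_forall fun γ => ?_
      have := abs_real_inner_le_norm (γ : EuclideanSpace ℝ (Fin 3)) e
      simpa [he] using this) s
  have h2 := hasSum_exp_aux (volume.restrict (Set.Ioc (-1:ℝ) 1)) (fun x => x) measurable_id
    (by
      filter_upwards [ae_restrict_mem measurableSet_Ioc] with x hx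
      exact abs_le.2 ⟨hx.1.le, hx.2⟩) s
  have h3 := h2.mul_left ((2 * π : ℝ) : ℂ)
  simp only [sph_moment e he, intervalIntegral.integral_of_le (show (-1:ℝ) ≤ 1 by norm_num)] at h1
  have h4 := h1.unique (a₂ := ((2 * π : ℝ) : ℂ) * ∫ x in Set.Ioc (-1:ℝ) 1, Complex.exp ((s * x : ℝ) * Complex.I)) (by
    have e : ∀ n : ℕ, ((2 * π : ℝ) : ℂ) * ((s * Complex.I) ^ n / n.factorial *
        ((∫ x in Set.Ioc (-1:ℝ) 1, x ^ n : ℝ) : ℂ)) = (s * Complex.I) ^ n / n.factorial *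
        ((2 * π * ∫ x in Set.Ioc (-1:ℝ) 1, x ^ n : ℝ) : ℂ) := by
      intro n
      rw [Complex.ofReal_mul (2 * π)]
      ring
    simpa only [e] using h3)
  rw [h4, ← intervalIntegral.integral_of_le (show (-1:ℝ) ≤ 1 by norm_num)]
  by_cases hs : s = 0
  · simp [hs]; norm_num; ring
  · have hc : ((s:ℂ) * Complex.I) ≠ 0 := by simp [hs]
    have h6 : ∀ x : ℝ, Complex.exp ((s * x : ℝ) * Complex.I) = Complex.exp ((s * Complex.I) * x) := by
      intro x; congr 1; push_cast; ring
    simp only [h6]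
    rw [integral_exp_mul_complex hc, sinc_of_ne_zero hs]
    push_cast
    rw [Complex.sin]
    have hs' : (s:ℂ) ≠ 0 := by exact_mod_cast hs
    have := Complex.I_ne_zero
    field_simp
    simp only [Complex.I_sq]
    ring

lemma sph_exp (ξ : EuclideanSpace ℝ (Fin 3)) (s : ℝ) :
    ∫ γ, Complex.exp ((inner ℝ (s • (γ : EuclideanSpace ℝ (Fin 3))) ξ : ℝ) * Complex.I) ∂sphMeas =
      4 * π * sinc (s * ‖ξ‖) := by
  by_cases hξ : ξ = 0
  · have := sph_exp_unit (EuclideanSpace.single 0 1) (by simp) 0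
    simpa [hξ] using this
  · have h : ‖ξ‖ ≠ 0 := norm_ne_zero_iff.2 hξ
    rw [← sph_exp_unit (‖ξ‖⁻¹ • ξ) (by simp [norm_smul, h]) (s * ‖ξ‖)]
    congr 1
    ext γ
    congr 3
    simp only [inner_smul_left, inner_smul_right]
    simp
    field_simp

instance sphereSurf_finite (R : ℝ) : IsFiniteMeasure (sphereSurf R) := by
  unfold sphereSurf
  exact Measure.smul_finite _ ENNReal.ofReal_ne_top

instance Fmeas_finite (c t : ℝ) : IsFiniteMeasure (Fmeas c t) := by
  unfold Fmeas
  exact Measure.smul_finite _ ENNReal.ofReal_ne_top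

lemma charFun_Fmeas (c t : ℝ) (hc : 0 < c) (ht : 0 < t) (ξ : EuclideanSpace ℝ (Fin 3)) :
    charFun (Fmeas c t) ξ = ((t * sinc (c * t * ‖ξ‖) : ℝ) : ℂ) := by
  rw [charFun_apply, Fmeas, sphereSurf, integral_smul_measure, integral_smul_measure,
    integral_map (by fun_prop) (by fun_prop), sph_exp,
    ENNReal.toReal_ofReal (by positivity), ENNReal.toReal_ofReal (by positivity)]
  have : (π:ℂ) ≠ 0 := by exact_mod_cast Real.pi_ne_zero
  have h2 : (c:ℂ) ≠ 0 := by exact_mod_cast hc.ne'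
  have h3 : (t:ℂ) ≠ 0 := by exact_mod_cast ht.ne'
  simp only [Complex.real_smul]
  push_cast
  field_simp

/-- The radial profile of the density. -/
noncomputable def radProf (c a b r : ℝ) : ℝ :=
  (1 / (8 * π * c ^ 2 * r)) * Set.indicator (Set.Icc a b) 1 r

lemma radProf_nonneg (c a b r : ℝ) (hr : 0 ≤ r) : 0 ≤ radProf c a b r := by
  unfold radProf
  exact mul_nonneg (by positivity) (Set.indicator_nonneg (by simp) _)

lemma radProf_measurable (c a b : ℝ) : Measurable (radProf c a b) := by
  unfold radProf
  exact Measurable.mul (by fun_prop) (measurable_one.indicator measurableSet_Icc)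

lemma sq_mul_radProf (c a b r : ℝ) (hr : 0 < r) :
    r ^ 2 * radProf c a b r = Set.indicator (Set.Icc a b) (fun r => r / (8 * π * c ^ 2)) r := by
  unfold radProf
  by_cases h : r ∈ Set.Icc a b
  · simp only [Set.indicator_of_mem h, Pi.one_apply]
    have := hr.ne'
    calc r ^ 2 * (1 / (8 * π * c ^ 2 * r) * 1) = (r / r) * (r / (8 * π * c ^ 2)) := by ring
      _ = _ := by rw [div_self this, one_mul]
  · simp [Set.indicator_of_notMem h]

lemma radProf_integrable (c a b : ℝ) :
    Integrable (fun x : EuclideanSpace ℝ (Fin 3) => radProf c a b ‖x‖) := by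
  rw [integrable_fun_norm_addHaar]
  have h : IntegrableOn (Set.indicator (Set.Icc a b) (fun r => r / (8 * π * c ^ 2))) (Set.Ioi 0) := by
    apply Integrable.integrableOn
    rw [integrable_indicator_iff measurableSet_Icc]
    exact ContinuousOn.integrableOn_Icc (by fun_prop)
  refine h.congr_fun (fun r hr => ?_) measurableSet_Ioi
  rw [show Module.finrank ℝ (EuclideanSpace ℝ (Fin 3)) - 1 = 2 by simp]
  exact (sq_mul_radProf c a b r hr).symm

lemma integral_sinc_aux (a b ρ : ℝ) (hρ : ρ ≠ 0) :
    ∫ r in a..b, r * sinc (r * ρ) = (cos (a * ρ) - cos (b * ρ)) / ρ ^ 2 := by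
  have h : ∀ r : ℝ, r * sinc (r * ρ) = sin (r * ρ) / ρ := by
    intro r
    by_cases hr : r = 0
    · simp [hr]
    · rw [sinc_of_ne_zero (mul_ne_zero hr hρ)]
      field_simp
  simp only [h]
  rw [intervalIntegral.integral_div, intervalIntegral.integral_comp_mul_right _ hρ, integral_sin]
  simp only [smul_eq_mul]
  field_simp

lemma charFun_density (c a b : ℝ) (ha : 0 ≤ a) (hab : a ≤ b)
    (ξ : EuclideanSpace ℝ (Fin 3)) :
    charFun ((volume : Measure (EuclideanSpace ℝ (Fin 3))).withDensity
      (fun x => ENNReal.ofReal (radProf c a b ‖x‖))) ξ =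
      ((1 / (2 * c ^ 2) * ∫ r in a..b, r * sinc (r * ‖ξ‖) : ℝ) : ℂ) := by
  have hm := radProf_measurable c a b
  rw [charFun_apply, integral_withDensity_eq_integral_toReal_smul (by fun_prop) (by simp)]
  have h0 : ∀ x : EuclideanSpace ℝ (Fin 3),
      (ENNReal.ofReal (radProf c a b ‖x‖)).toReal = radProf c a b ‖x‖ := fun x =>
    ENNReal.toReal_ofReal (radProf_nonneg c a b _ (norm_nonneg x))
  simp only [h0]
  rw [polar_iter]
  · have h1 : ∀ r ∈ Set.Ioi (0:ℝ), r ^ 2 • ∫ γ, radProf c a b ‖r • (γ : EuclideanSpace ℝ (Fin 3))‖ •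
        Complex.exp ((inner ℝ (r • (γ : EuclideanSpace ℝ (Fin 3))) ξ : ℝ) * Complex.I) ∂sphMeas
        = ((Set.indicator (Set.Icc a b) (fun r => 1 / (2 * c ^ 2) * (r * sinc (r * ‖ξ‖))) r : ℝ) : ℂ) := by
      intro r hr
      have hr' : (0:ℝ) < r := hr
      have h2 : ∀ γ : Metric.sphere (0 : EuclideanSpace ℝ (Fin 3)) 1,
          ‖r • (γ : EuclideanSpace ℝ (Fin 3))‖ = r := by
        intro γ; simp [norm_smul, abs_of_pos hr']
      simp only [h2]
      rw [integral_smul, sph_exp, smul_smul, sq_mul_radProf c a b r hr']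
      by_cases h : r ∈ Set.Icc a b
      · simp only [Set.indicator_of_mem h, Complex.real_smul]
        have : (π:ℂ) ≠ 0 := by exact_mod_cast Real.pi_ne_zero
        push_cast
        field_simp
        ring
      · simp [Set.indicator_of_notMem h]
    rw [setIntegral_congr_fun measurableSet_Ioi h1, integral_complex_ofReal]
    congr 1
    rw [setIntegral_indicator measurableSet_Icc, ← intervalIntegral.integral_const_mul,
      intervalIntegral.integral_of_le hab]
    apply setIntegral_congr_set
    have e1 : Set.Ioc a b =ᵐ[volume] Set.Icc a b := Ioc_ae_eq_Icc
    have e2 : (Set.Ioi 0 : Set ℝ) =ᵐ[volume] Set.Ici 0 := Ioi_ae_eq_Ici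
    have e3 : Set.Ici 0 ∩ Set.Icc a b = Set.Icc a b :=
      Set.inter_eq_right.2 (fun x hx => ha.trans hx.1)
    have e4 : (Set.Ioi 0 ∩ Set.Icc a b : Set ℝ) =ᵐ[volume] (Set.Ici 0 ∩ Set.Icc a b : Set ℝ) :=
      ae_eq_set_inter e2 (Filter.EventuallyEq.refl _ _)
    rw [e3] at e4
    exact e4.trans e1.symm
  · refine Integrable.mono (radProf_integrable c a b) ?_ ?_
    · exact (radProf_integrable c a b).aestronglyMeasurable.smul
        (Continuous.aestronglyMeasurable (by fun_prop))
    · refine Filter.Eventually.of_forall fun x => ?_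
      rw [norm_smul, Complex.norm_exp_ofReal_mul_I, mul_one]

/-- the convolution `F_t ∗ F_{t'}` is absolutely continuous, with density
`h ↦ (1/(8πc²|h|)) 1_{[c|t−t'|, c(t+t')]}(|h|)`. -/
theorem stmt_6 (c : ℝ) (hc : 0 < c) (t t' : ℝ) (ht : 0 < t) (ht' : 0 < t') :
    ∀ A : Set (EuclideanSpace ℝ (Fin 3)), MeasurableSet A →
      (Fmeas c t ∗ Fmeas c t') A =
        ∫⁻ h in A, ENNReal.ofReal ((1 / (8 * π * c ^ 2 * ‖h‖)) *
          Set.indicator (Set.Icc (c * |t - t'|) (c * (t + t'))) 1 ‖h‖) := by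
  intro A hA
  have hab : c * |t - t'| ≤ c * (t + t') := by
    gcongr
    rw [abs_le]; constructor <;> linarith
  have ha : 0 ≤ c * |t - t'| := by positivity
  rw [← withDensity_apply _ hA]
  congr 1
  have : IsFiniteMeasure ((volume : Measure (EuclideanSpace ℝ (Fin 3))).withDensity
      (fun x => ENNReal.ofReal (radProf c (c * |t - t'|) (c * (t + t')) ‖x‖))) :=
    isFiniteMeasure_withDensity_ofReal (radProf_integrable _ _ _).2
  change _ = (volume : Measure (EuclideanSpace ℝ (Fin 3))).withDensity
      (fun x => ENNReal.ofReal (radProf c (c * |t - t'|) (c * (t + t')) ‖x‖))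
  apply Measure.ext_of_charFun
  ext ξ
  rw [charFun_conv, charFun_Fmeas c t hc ht, charFun_Fmeas c t' hc ht', charFun_density c _ _ ha hab,
    ← Complex.ofReal_mul]
  congr 1
  by_cases hξ : ‖ξ‖ = 0
  · simp only [hξ, mul_zero, sinc_zero, mul_one, integral_id]
    rw [mul_pow, mul_pow, sq_abs]
    field_simp
    ring
  · rw [integral_sinc_aux _ _ _ hξ, sinc_of_ne_zero (by positivity), sinc_of_ne_zero (by positivity)]
    have h1 : cos (c * |t - t'| * ‖ξ‖) = cos (c * t * ‖ξ‖ - c * t' * ‖ξ‖) := by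
      rw [← cos_abs (c * t * ‖ξ‖ - c * t' * ‖ξ‖)]
      congr 1
      rw [show c * t * ‖ξ‖ - c * t' * ‖ξ‖ = c * (t - t') * ‖ξ‖ by ring, abs_mul, abs_mul, abs_of_pos hc, abs_norm]
    rw [h1, show c * (t + t') * ‖ξ‖ = c * t * ‖ξ‖ + c * t' * ‖ξ‖ by ring, cos_sub, cos_add]
    field_simp
    ring
end

section
/- Let c > 0, let f : [0,∞) → ℝ be continuous, and let F(s) = ∫₀^s f(u) du. Then for every x ∈ ℝ³ with x ≠ 0 and every t ∈ ℝ, (t/(4π)) ∫_{S²} f(|x − c|t|γ|²) dσ_{S²}(γ) = (sgn(t)/(4c|x|)) · ( F((|x| + c|t|)²) − F((|x| − c|t|)²) ), where σ_{S²} is the surface measure on the unit sphere S² ⊂ ℝ³ (total mass 4π) and sgn is the sign function with sgn(0) = 0. -/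
open MeasureTheory Real

/-- Radial Gaussian moments. -/
lemma aux_Ioi (n : ℕ) : ∫ r in Set.Ioi (0:ℝ), r ^ n * exp (-r ^ 2) = Gamma ((n + 1) / 2) / 2 := by
  have h := integral_rpow_mul_exp_neg_rpow (p := 2) (q := n) (by norm_num)
    (by have : (0:ℝ) ≤ n := n.cast_nonneg
        linarith)
  simp only [rpow_natCast, rpow_two] at h
  rw [h]; ring

lemma aux_even (n : ℕ) (hn : Even n) :
    ∫ r : ℝ, r ^ n * exp (-r ^ 2) = Gamma ((n + 1) / 2) := by
  have h := integral_comp_abs (f := fun r : ℝ => r ^ n * exp (-r ^ 2))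
  simp only [hn.pow_abs, sq_abs] at h
  rw [h, aux_Ioi]; ring

lemma aux_odd (n : ℕ) (hn : Odd n) :
    ∫ r : ℝ, r ^ n * exp (-r ^ 2) = 0 := by
  have h := integral_neg_eq_self (fun r : ℝ => r ^ n * exp (-r ^ 2)) volume
  simp only [hn.neg_pow, neg_sq, neg_mul, integral_neg] at h
  linarith

lemma aux_gauss : ∫ r : ℝ, exp (-r ^ 2) = √π := by
  simpa using integral_gaussian 1

/-- Polar coordinates. -/
lemma aux_polar (n : ℕ) (b : OrthonormalBasis (Fin 3) ℝ (EuclideanSpace ℝ (Fin 3))) :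
    ∫ y : (EuclideanSpace ℝ (Fin 3)), (b.repr y 0) ^ n * exp (-‖y‖ ^ 2) =
      (∫ γ : Metric.sphere (0 : (EuclideanSpace ℝ (Fin 3))) 1, (b.repr (γ : (EuclideanSpace ℝ (Fin 3))) 0) ^ n ∂sphMeas)
        * (Gamma ((n + 3) / 2) / 2) := by
  have hfin : IsFiniteMeasure sphMeas := by unfold sphMeas; infer_instance
  have hd : Module.finrank ℝ (EuclideanSpace ℝ (Fin 3)) - 1 = 2 := by simp
  calc
    _ = ∫ y : ({(0)}ᶜ : Set (EuclideanSpace ℝ (Fin 3))), (b.repr y.1 0) ^ n * exp (-‖y.1‖ ^ 2) 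
        ∂((volume : Measure (EuclideanSpace ℝ (Fin 3))).comap (Subtype.val)) := by
      rw [integral_subtype_comap (measurableSet_singleton _).compl
        fun y : (EuclideanSpace ℝ (Fin 3)) ↦ (b.repr y 0) ^ n * exp (-‖y‖ ^ 2), restrict_compl_singleton]
    _ = ∫ p, (b.repr (p.1 : (EuclideanSpace ℝ (Fin 3))) 0) ^ n * ((p.2 : ℝ) ^ n * exp (-(p.2 : ℝ) ^ 2))
        ∂(sphMeas.prod (.volumeIoiPow 2)) := by
      have h := (volume : Measure (EuclideanSpace ℝ (Fin 3))).measurePreserving_homeomorphUnitSphereProd.integral_comp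
        (Homeomorph.measurableEmbedding _)
        (fun p => (b.repr (p.1 : (EuclideanSpace ℝ (Fin 3))) 0) ^ n * ((p.2 : ℝ) ^ n * exp (-(p.2 : ℝ) ^ 2)))
      rw [hd] at h
      rw [sphMeas, ← h]
      refine integral_congr_ae (.of_forall fun y => ?_)
      have hy : ‖(y : (EuclideanSpace ℝ (Fin 3)))‖ ≠ 0 := norm_ne_zero_iff.2 y.2
      simp only [homeomorphUnitSphereProd_apply_fst_coe, homeomorphUnitSphereProd_apply_snd_coe,
        map_smul, PiLp.smul_apply, smul_eq_mul, mul_pow, inv_pow]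
      field_simp
    _ = _ := by
      rw [integral_prod_mul (μ := sphMeas) (ν := .volumeIoiPow 2)
        (fun γ => (b.repr (γ : (EuclideanSpace ℝ (Fin 3))) 0) ^ n)
        (fun r : Set.Ioi (0:ℝ) => (r : ℝ) ^ n * exp (-(r : ℝ) ^ 2))]
      congr 1
      simp only [Measure.volumeIoiPow, ENNReal.ofReal]
      rw [integral_withDensity_eq_integral_smul,
        integral_subtype_comap measurableSet_Ioi
          fun a ↦ Real.toNNReal (a ^ 2) • (a ^ n * exp (-a ^ 2)),
        setIntegral_congr_fun (g := fun a => a ^ (n + 2) * exp (-a ^ 2)) measurableSet_Ioi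
          fun x hx ↦ ?_, aux_Ioi]
      · push_cast; ring_nf
      · simp only [NNReal.smul_def, Real.coe_toNNReal _ (sq_nonneg x), smul_eq_mul]; ring
      · exact (measurable_subtype_coe.pow_const _).real_toNNReal

lemma aux_cart (n : ℕ) (b : OrthonormalBasis (Fin 3) ℝ (EuclideanSpace ℝ (Fin 3))) :
    ∫ y : (EuclideanSpace ℝ (Fin 3)), (b.repr y 0) ^ n * exp (-‖y‖ ^ 2) =
      (∫ r : ℝ, r ^ n * exp (-r ^ 2)) * π := by
  have h1 := b.measurePreserving_repr.integral_comp
    b.repr.toHomeomorph.measurableEmbedding (fun y : (EuclideanSpace ℝ (Fin 3)) => (y 0) ^ n * exp (-‖y‖ ^ 2))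
  have h2 := (PiLp.volume_preserving_toLp (Fin 3)).integral_comp
    (MeasurableEquiv.toLp 2 _).measurableEmbedding (fun y : (EuclideanSpace ℝ (Fin 3)) => (y 0) ^ n * exp (-‖y‖ ^ 2))
  simp only [LinearIsometryEquiv.norm_map] at h1
  rw [h1, ← h2]
  have h3 := integral_fintype_prod_volume_eq_prod (ι := Fin 3)
    (f := ![fun r : ℝ => r ^ n * exp (-r ^ 2), fun r : ℝ => exp (-r ^ 2), fun r : ℝ => exp (-r ^ 2)])
  simp only [Fin.prod_univ_three, Matrix.cons_val_zero, Matrix.cons_val_one, Matrix.cons_val,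
    aux_gauss] at h3
  rw [mul_assoc, mul_self_sqrt pi_pos.le] at h3
  rw [← h3]
  congr 1; ext v
  rw [EuclideanSpace.norm_sq_eq, Fin.sum_univ_three]
  simp only [norm_eq_abs, sq_abs, neg_add, exp_add]
  ring

lemma aux_moment (n : ℕ) (b : OrthonormalBasis (Fin 3) ℝ (EuclideanSpace ℝ (Fin 3))) :
    ∫ γ : Metric.sphere (0 : (EuclideanSpace ℝ (Fin 3))) 1, (b.repr (γ : (EuclideanSpace ℝ (Fin 3))) 0) ^ n ∂sphMeas
      = 2 * π * ∫ z in (-1:ℝ)..1, z ^ n := by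
  have h := (aux_polar n b).symm.trans (aux_cart n b)
  have hn0 : (0:ℝ) ≤ n := n.cast_nonneg
  have hG : Gamma ((n + 3) / 2) = ((n + 1) / 2) * Gamma (((n:ℝ) + 1) / 2) := by
    rw [← Gamma_add_one (by positivity)]; ring_nf
  have hpos : 0 < Gamma (((n:ℝ) + 1) / 2) := Gamma_pos_of_pos (by positivity)
  rw [hG] at h
  rw [integral_pow]
  rcases n.even_or_odd with hn | hn
  · rw [aux_even n hn] at h
    rw [hn.add_one.neg_one_pow]
    field_simp at h ⊢
    simp only [one_pow]
    linarith
  · rw [aux_odd n hn] at h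
    rw [hn.add_one.neg_one_pow]
    simp only [zero_mul, mul_eq_zero] at h
    rcases h with h | h
    · simp [h]
    · exfalso; revert h; positivity

lemma aux_cont (b : OrthonormalBasis (Fin 3) ℝ (EuclideanSpace ℝ (Fin 3))) :
    Continuous fun γ : Metric.sphere (0 : (EuclideanSpace ℝ (Fin 3))) 1 => b.repr (γ : (EuclideanSpace ℝ (Fin 3))) 0 := by
  fun_prop

lemma aux_int (h : Metric.sphere (0 : (EuclideanSpace ℝ (Fin 3))) 1 → ℝ) (hh : Continuous h) : Integrable h sphMeas := by
  have : IsFiniteMeasure sphMeas := by unfold sphMeas; infer_instance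
  exact hh.integrable_of_hasCompactSupport (HasCompactSupport.of_compactSpace h)

lemma aux_poly (p : Polynomial ℝ) (b : OrthonormalBasis (Fin 3) ℝ (EuclideanSpace ℝ (Fin 3))) :
    ∫ γ : Metric.sphere (0 : (EuclideanSpace ℝ (Fin 3))) 1, p.eval (b.repr (γ : (EuclideanSpace ℝ (Fin 3))) 0) ∂sphMeas
      = 2 * π * ∫ z in (-1:ℝ)..1, p.eval z := by
  simp only [Polynomial.eval_eq_sum_range]
  rw [integral_finsetSum, intervalIntegral.integral_finsetSum, Finset.mul_sum]
  · refine Finset.sum_congr rfl fun i _ => ?_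
    rw [integral_const_mul, aux_moment, intervalIntegral.integral_const_mul]
    ring
  · intro i _
    exact Continuous.intervalIntegrable (by fun_prop) _ _
  · intro i _
    exact aux_int _ (((aux_cont b).pow i).const_mul _)

lemma aux_mem (b : OrthonormalBasis (Fin 3) ℝ (EuclideanSpace ℝ (Fin 3))) (γ : Metric.sphere (0 : (EuclideanSpace ℝ (Fin 3))) 1) :
    b.repr (γ : (EuclideanSpace ℝ (Fin 3))) 0 ∈ Set.Icc (-1:ℝ) 1 := by
  rw [Set.mem_Icc, ← abs_le]
  have h := PiLp.norm_apply_le (b.repr (γ : (EuclideanSpace ℝ (Fin 3)))) 0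
  rw [LinearIsometryEquiv.norm_map] at h
  simpa using h

/-- The hat-box theorem of Archimedes. -/
lemma aux_arch (g : ℝ → ℝ) (hg : Continuous g) (b : OrthonormalBasis (Fin 3) ℝ (EuclideanSpace ℝ (Fin 3))) :
    ∫ γ : Metric.sphere (0 : (EuclideanSpace ℝ (Fin 3))) 1, g (b.repr (γ : (EuclideanSpace ℝ (Fin 3))) 0) ∂sphMeas
      = 2 * π * ∫ z in (-1:ℝ)..1, g z := by
  have hfin : IsFiniteMeasure sphMeas := by unfold sphMeas; infer_instance
  set C := sphMeas.real Set.univ + 4 * π with hC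
  have hC0 : 0 < C := by positivity
  have key : ∀ ε > 0, |(∫ γ : Metric.sphere (0 : (EuclideanSpace ℝ (Fin 3))) 1, g (b.repr (γ : (EuclideanSpace ℝ (Fin 3))) 0) ∂sphMeas)
      - 2 * π * ∫ z in (-1:ℝ)..1, g z| ≤ ε * C := by
    intro ε hε
    obtain ⟨p, hp⟩ := exists_polynomial_near_of_continuousOn (-1) 1 g hg.continuousOn ε hε
    have h1 : |(∫ γ : Metric.sphere (0 : (EuclideanSpace ℝ (Fin 3))) 1, p.eval (b.repr (γ : (EuclideanSpace ℝ (Fin 3))) 0) ∂sphMeas)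
        - ∫ γ : Metric.sphere (0 : (EuclideanSpace ℝ (Fin 3))) 1, g (b.repr (γ : (EuclideanSpace ℝ (Fin 3))) 0) ∂sphMeas|
        ≤ ε * sphMeas.real Set.univ := by
      rw [← integral_sub (aux_int (fun γ => p.eval (b.repr (γ : (EuclideanSpace ℝ (Fin 3))) 0))
        (p.continuous.comp (aux_cont b)))
        (aux_int (fun γ => g (b.repr (γ : (EuclideanSpace ℝ (Fin 3))) 0)) (hg.comp (aux_cont b)))]
      rw [← norm_eq_abs]
      refine norm_integral_le_of_norm_le_const (.of_forall fun γ => ?_)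
      exact (hp _ (aux_mem b γ)).le
    have h2 : |(∫ z in (-1:ℝ)..1, p.eval z) - ∫ z in (-1:ℝ)..1, g z| ≤ ε * 2 := by
      rw [← intervalIntegral.integral_sub (p.continuous.intervalIntegrable _ _)
        (hg.intervalIntegrable _ _)]
      have := intervalIntegral.norm_integral_le_of_norm_le_const (a := (-1:ℝ)) (b := 1) (C := ε)
        (f := fun z => p.eval z - g z) (fun z hz => by
          rw [Set.uIoc_of_le (by norm_num)] at hz
          exact (hp z ⟨hz.1.le, hz.2⟩).le)
      norm_num at this ⊢
      exact this
    rw [aux_poly] at h1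
    rw [abs_le] at h1 h2 ⊢
    have hpi := pi_pos
    constructor <;> nlinarith
  by_contra hne
  have hpos := abs_pos.2 (sub_ne_zero.2 hne)
  have := key (|(∫ γ : Metric.sphere (0 : (EuclideanSpace ℝ (Fin 3))) 1, g (b.repr (γ : (EuclideanSpace ℝ (Fin 3))) 0) ∂sphMeas)
      - 2 * π * ∫ z in (-1:ℝ)..1, g z| / (2 * C)) (by positivity)
  field_simp at this
  linarith

lemma aux_basis (x : (EuclideanSpace ℝ (Fin 3))) (hx : x ≠ 0) :
    ∃ b : OrthonormalBasis (Fin 3) ℝ (EuclideanSpace ℝ (Fin 3)), x = ‖x‖ • b 0 := by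
  have hn : ‖x‖ ≠ 0 := norm_ne_zero_iff.2 hx
  obtain ⟨b, hb⟩ := Orthonormal.exists_orthonormalBasis_extension_of_card_eq (𝕜 := ℝ)
    (E := (EuclideanSpace ℝ (Fin 3))) (ι := Fin 3) (by simp) (v := fun _ => ‖x‖⁻¹ • x) (s := {0}) (by
      constructor
      · intro i
        simp [norm_smul, hn]
      · intro i j hij
        exact absurd (Subsingleton.elim i j) hij)
  refine ⟨b, ?_⟩
  rw [hb 0 rfl, smul_smul, mul_inv_cancel₀ hn, one_smul]

/-- explicit evaluation of the spherical mean of a radially symmetric function: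
`(t/(4π)) ∫_{S²} f(|x − c|t|γ|²) dσ(γ) = (sgn t/(4c|x|)) (F((|x|+c|t|)²) − F((|x|−c|t|)²))`. -/
theorem stmt_10 (c : ℝ) (hc : 0 < c) (f : ℝ → ℝ) (hf : ContinuousOn f (Set.Ici 0))
    (F : ℝ → ℝ) (hF : ∀ s, F s = ∫ u in (0:ℝ)..s, f u)
    (x : EuclideanSpace ℝ (Fin 3)) (hx : x ≠ 0) (t : ℝ) :
    (t / (4 * π)) *
        ∫ γ : Metric.sphere (0 : EuclideanSpace ℝ (Fin 3)) 1,
          f (‖x - (c * |t|) • (γ : EuclideanSpace ℝ (Fin 3))‖ ^ 2) ∂sphMeas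
      = (Real.sign t / (4 * c * ‖x‖)) *
          (F ((‖x‖ + c * |t|) ^ 2) - F ((‖x‖ - c * |t|) ^ 2)) := by
  rcases eq_or_ne t 0 with rfl | ht
  · simp
  obtain ⟨b, hb⟩ := aux_basis x hx
  have hR : 0 < ‖x‖ := norm_pos_iff.2 hx
  have hρ : 0 < c * |t| := by positivity
  generalize hR' : ‖x‖ = R at *
  set ρ := c * |t| with hρd
  let f' : ℝ → ℝ := fun s => f (max 0 s)
  have hf' : Continuous f' :=
    hf.comp_continuous (by fun_prop) (fun s => Set.mem_Ici.2 (le_max_left 0 s))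
  have h1 : ∀ γ : Metric.sphere (0 : (EuclideanSpace ℝ (Fin 3))) 1, f (‖x - ρ • (γ : (EuclideanSpace ℝ (Fin 3)))‖ ^ 2)
      = f' ((R ^ 2 + ρ ^ 2) - (2 * R * ρ) * (b.repr (γ : (EuclideanSpace ℝ (Fin 3))) 0)) := by
    intro γ
    have : ‖x - ρ • (γ : (EuclideanSpace ℝ (Fin 3)))‖ ^ 2 = (R ^ 2 + ρ ^ 2) - (2 * R * ρ) * (b.repr (γ : (EuclideanSpace ℝ (Fin 3))) 0) := by
      rw [norm_sub_sq_real, hR', norm_smul, inner_smul_right]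
      conv_lhs => rw [hb]
      rw [real_inner_smul_left, OrthonormalBasis.repr_apply_apply]
      simp only [norm_eq_of_mem_sphere, norm_eq_abs, mul_one, sq_abs]
      ring
    simp only [f']
    rw [← this, max_eq_right (sq_nonneg _)]
  have h2 : F ((R + ρ) ^ 2) - F ((R - ρ) ^ 2) = ∫ u in ((R - ρ) ^ 2)..((R + ρ) ^ 2), f' u := by
    have h3 : ∀ s, 0 ≤ s → F s = ∫ u in (0:ℝ)..s, f' u := by
      intro s hs
      rw [hF]
      refine intervalIntegral.integral_congr fun u hu => ?_
      rw [Set.uIcc_of_le hs] at hu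
      simp only [f']
      rw [max_eq_right hu.1]
    rw [h3 _ (sq_nonneg _), h3 _ (sq_nonneg _)]
    exact intervalIntegral.integral_interval_sub_left (hf'.intervalIntegrable _ _)
      (hf'.intervalIntegrable _ _)
  simp only [h1]
  rw [aux_arch (fun z => f' ((R ^ 2 + ρ ^ 2) - (2 * R * ρ) * z)) (by fun_prop) b,
    intervalIntegral.integral_comp_sub_mul f' (by positivity), h2, smul_eq_mul]
  rw [show R ^ 2 + ρ ^ 2 - 2 * R * ρ * 1 = (R - ρ) ^ 2 by ring,
    show R ^ 2 + ρ ^ 2 - 2 * R * ρ * (-1) = (R + ρ) ^ 2 by ring]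
  rw [← mul_assoc, ← mul_assoc]
  congr 1
  rw [hρd]
  have hpi := pi_ne_zero
  rcases lt_or_gt_of_ne ht with h | h
  · rw [Real.sign_of_neg h, abs_of_neg h]
    field_simp
  · rw [Real.sign_of_pos h, abs_of_pos h]
    field_simp
end

section
/- Let c > 0, let k⁰ : [0,∞) × [0,∞) → ℝ be continuous, and let K(a,b) = ∫₀^a ∫₀^b k⁰(s,s') ds' ds. Then for all x, x' ∈ ℝ³ with x ≠ 0 and x' ≠ 0, writing r = |x| and r' = |x'|, and for all t, t' ∈ ℝ: (t t' / (16π²)) ∫_{S²} ∫_{S²} k⁰( |x − c|t|γ|², |x' − c|t'|γ'|² ) dσ_{S²}(γ) dσ_{S²}(γ') = (sgn(t t') / (16 c² r r')) · Σ_{ε,ε' ∈ {−1,1}} ε ε' K( (r + ε c|t|)², (r' + ε' c|t'|)² ). -/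
open MeasureTheory Real

/-- half-line Gaussian moment -/
noncomputable def gM (n : ℕ) : ℝ := ∫ r in Set.Ioi (0:ℝ), r ^ n * Real.exp (-r ^ 2)

lemma gM_eq (n : ℕ) : gM n = (1 / 2) * Real.Gamma (((n:ℝ) + 1) / 2) := by
  rw [← integral_rpow_mul_exp_neg_rpow (p := 2) (q := n) (by norm_num)
    (by have : (0:ℝ) ≤ n := n.cast_nonneg
        linarith)]
  unfold gM
  refine setIntegral_congr_fun measurableSet_Ioi fun r _ => ?_
  simp only [Real.rpow_natCast, Real.rpow_two]

lemma gM_pos (n : ℕ) : 0 < gM n := by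
  rw [gM_eq]
  have : 0 < Real.Gamma (((n:ℝ) + 1) / 2) := Real.Gamma_pos_of_pos (by positivity)
  positivity

lemma gM_rec (n : ℕ) : gM (n + 2) = ((n:ℝ) + 1) / 2 * gM n := by
  rw [gM_eq, gM_eq]
  have h : (((n + 2 : ℕ) : ℝ) + 1) / 2 = ((n:ℝ) + 1) / 2 + 1 := by push_cast; ring
  rw [h, Real.Gamma_add_one (by positivity)]
  ring

lemma gJ_eq (n : ℕ) : ∫ z : ℝ, z ^ n * Real.exp (-z ^ 2) = (1 + (-1) ^ n) * gM n := by
  have hint : Integrable (fun z : ℝ => z ^ n * Real.exp (-z ^ 2)) := by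
    have := integrable_rpow_mul_exp_neg_mul_sq (b := 1) one_pos (s := n)
      (by have : (0:ℝ) ≤ n := n.cast_nonneg
          linarith)
    simpa using this
  rw [← intervalIntegral.integral_Iic_add_Ioi (b := 0) hint.integrableOn hint.integrableOn]
  have h := integral_comp_neg_Ioi (0:ℝ) (fun z : ℝ => z ^ n * Real.exp (-z ^ 2))
  rw [neg_zero] at h
  rw [← h]
  have h2 : ∫ x in Set.Ioi (0:ℝ), (-x) ^ n * Real.exp (-(-x) ^ 2) = (-1) ^ n * gM n := by
    unfold gM
    rw [← integral_const_mul]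
    refine setIntegral_congr_fun measurableSet_Ioi fun r _ => ?_
    simp only [neg_sq]
    rw [neg_pow r n]; ring
  rw [h2]
  unfold gM
  ring

lemma gauss3 (e : EuclideanSpace ℝ (Fin 3)) (he : ‖e‖ = 1) (n : ℕ) :
    ∫ y : EuclideanSpace ℝ (Fin 3), inner ℝ e y ^ n * Real.exp (-‖y‖ ^ 2) = π * ((1 + (-1) ^ n) * gM n) := by
  obtain ⟨b, hb⟩ := Orthonormal.exists_orthonormalBasis_extension_of_card_eq (𝕜 := ℝ) (E := EuclideanSpace ℝ (Fin 3))
    (ι := Fin 3) (by simp) (v := fun _ => e) (s := {0}) (by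
      rw [orthonormal_iff_ite]
      rintro ⟨i, hi⟩ ⟨j, hj⟩
      simp only [Set.mem_singleton_iff] at hi hj
      subst hi; subst hj
      simp [Set.domRestrict, he])
  have hb0 : b 0 = e := hb 0 rfl
  have h1 : ∫ y : EuclideanSpace ℝ (Fin 3), inner ℝ e y ^ n * Real.exp (-‖y‖ ^ 2)
      = ∫ z : EuclideanSpace ℝ (Fin 3), z 0 ^ n * Real.exp (-‖z‖ ^ 2) := by
    rw [← b.measurePreserving_repr.integral_comp b.repr.toHomeomorph.measurableEmbedding
      (fun z : EuclideanSpace ℝ (Fin 3) => z 0 ^ n * Real.exp (-‖z‖ ^ 2))]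
    refine integral_congr_ae (Filter.Eventually.of_forall fun y => ?_)
    simp only [b.repr_apply_apply, hb0, LinearIsometryEquiv.norm_map]
  rw [h1, ← (PiLp.volume_preserving_toLp (Fin 3)).integral_comp
    (MeasurableEquiv.toLp 2 (Fin 3 → ℝ)).measurableEmbedding]
  have h2 := integral_fintype_prod_volume_eq_prod (𝕜 := ℝ) (ι := Fin 3) (E := fun _ => ℝ)
    (fun i z => (if i = 0 then z ^ n else 1) * Real.exp (-z ^ 2))
  have hg : ∫ z : ℝ, Real.exp (-z ^ 2) = √π := by
    have := integral_gaussian 1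
    simpa using this
  rw [Fin.prod_univ_three] at h2
  simp only [Fin.prod_univ_three, if_true, one_mul, Fin.isValue, one_ne_zero, if_false,
    (by decide : (2 : Fin 3) ≠ 0), hg, gJ_eq] at h2
  have h3 : ((1 + (-1) ^ n) * gM n) * √π * √π = π * ((1 + (-1) ^ n) * gM n) := by
    rw [mul_assoc, Real.mul_self_sqrt Real.pi_pos.le, mul_comm]
  rw [← h3, ← h2]
  refine integral_congr_ae (Filter.Eventually.of_forall fun y => ?_)
  simp only [EuclideanSpace.norm_sq_eq, Fin.sum_univ_three, Real.norm_eq_abs, sq_abs]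
  rw [neg_add, neg_add, Real.exp_add, Real.exp_add]
  ring

lemma polar3 (e : EuclideanSpace ℝ (Fin 3)) (n : ℕ) :
    ∫ y : EuclideanSpace ℝ (Fin 3), inner ℝ e y ^ n * Real.exp (-‖y‖ ^ 2)
      = (∫ γ : Metric.sphere (0 : EuclideanSpace ℝ (Fin 3)) 1, inner ℝ e (γ : EuclideanSpace ℝ (Fin 3)) ^ n ∂sphMeas) * gM (n + 2) := by
  have hd : Module.finrank ℝ (EuclideanSpace ℝ (Fin 3)) - 1 = 2 := by simp
  calc
    _ = ∫ y : ({(0:EuclideanSpace ℝ (Fin 3))}ᶜ : Set (EuclideanSpace ℝ (Fin 3))), inner ℝ e (y : EuclideanSpace ℝ (Fin 3)) ^ n * Real.exp (-‖(y : EuclideanSpace ℝ (Fin 3))‖ ^ 2)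
        ∂((volume : Measure (EuclideanSpace ℝ (Fin 3))).comap (↑)) := by
      rw [integral_subtype_comap (measurableSet_singleton _).compl
        fun y : EuclideanSpace ℝ (Fin 3) => inner ℝ e y ^ n * Real.exp (-‖y‖ ^ 2), restrict_compl_singleton]
    _ = ∫ p : Metric.sphere (0 : EuclideanSpace ℝ (Fin 3)) 1 × Set.Ioi (0:ℝ),
          (inner ℝ e (p.1 : EuclideanSpace ℝ (Fin 3)) ^ n) * ((p.2 : ℝ) ^ n * Real.exp (-(p.2 : ℝ) ^ 2))
          ∂((volume : Measure (EuclideanSpace ℝ (Fin 3))).toSphere.prod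
            (Measure.volumeIoiPow (Module.finrank ℝ (EuclideanSpace ℝ (Fin 3)) - 1))) := by
      rw [← (volume : Measure (EuclideanSpace ℝ (Fin 3))).measurePreserving_homeomorphUnitSphereProd.integral_comp
        (Homeomorph.measurableEmbedding _)]
      refine integral_congr_ae (Filter.Eventually.of_forall fun y => ?_)
      have hy : ‖(y : EuclideanSpace ℝ (Fin 3))‖ ≠ 0 := norm_ne_zero_iff.mpr y.2
      simp only [homeomorphUnitSphereProd_apply_fst_coe, homeomorphUnitSphereProd_apply_snd_coe,
        inner_smul_right]
      rw [mul_pow, inv_pow]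
      field_simp
    _ = _ := by
      rw [integral_prod_mul (fun γ : Metric.sphere (0 : EuclideanSpace ℝ (Fin 3)) 1 => inner ℝ e (γ : EuclideanSpace ℝ (Fin 3)) ^ n)
        (fun r : Set.Ioi (0:ℝ) => (r : ℝ) ^ n * Real.exp (-(r : ℝ) ^ 2)), hd]
      congr 1
      simp only [Measure.volumeIoiPow, ENNReal.ofReal]
      rw [integral_withDensity_eq_integral_smul,
        integral_subtype_comap measurableSet_Ioi
          fun a : ℝ => Real.toNNReal (a ^ 2) • (a ^ n * Real.exp (-a ^ 2))]
      · unfold gM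
        refine setIntegral_congr_fun measurableSet_Ioi fun x _ => ?_
        rw [NNReal.smul_def, Real.coe_toNNReal _ (sq_nonneg x), smul_eq_mul]
        ring
      · exact (measurable_subtype_coe.pow_const _).real_toNNReal

instance : IsFiniteMeasure sphMeas := by unfold sphMeas; infer_instance

lemma sph_pow (e : EuclideanSpace ℝ (Fin 3)) (he : ‖e‖ = 1) (n : ℕ) :
    ∫ γ : Metric.sphere (0 : EuclideanSpace ℝ (Fin 3)) 1, inner ℝ e (γ : EuclideanSpace ℝ (Fin 3)) ^ n ∂sphMeas
      = 2 * π * ∫ u in (-1:ℝ)..1, u ^ n := by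
  have h := (polar3 e n).symm.trans (gauss3 e he n)
  rw [gM_rec] at h
  have hM := (gM_pos n).ne'
  have hn : (n:ℝ) + 1 ≠ 0 := by positivity
  rw [integral_pow, one_pow, pow_succ]
  generalize (∫ γ : Metric.sphere (0 : EuclideanSpace ℝ (Fin 3)) 1, inner ℝ e (γ : EuclideanSpace ℝ (Fin 3)) ^ n ∂sphMeas) = I at *
  field_simp
  apply mul_right_cancel₀ hM
  linear_combination 2 * h

lemma sph_int {f : EuclideanSpace ℝ (Fin 3) → ℝ} (hf : Continuous f) :
    Integrable (fun γ : Metric.sphere (0 : EuclideanSpace ℝ (Fin 3)) 1 => f γ) sphMeas := by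
  have : CompactSpace (Metric.sphere (0 : EuclideanSpace ℝ (Fin 3)) 1) := isCompact_iff_compactSpace.mp (isCompact_sphere _ _)
  exact (hf.comp continuous_subtype_val).integrable_of_hasCompactSupport
    (HasCompactSupport.of_compactSpace _)

lemma sph_poly (e : EuclideanSpace ℝ (Fin 3)) (he : ‖e‖ = 1) (p : Polynomial ℝ) :
    ∫ γ : Metric.sphere (0 : EuclideanSpace ℝ (Fin 3)) 1, p.eval (inner ℝ e (γ : EuclideanSpace ℝ (Fin 3))) ∂sphMeas
      = 2 * π * ∫ u in (-1:ℝ)..1, p.eval u := by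
  simp only [Polynomial.eval_eq_sum_range]
  rw [integral_finsetSum, intervalIntegral.integral_finsetSum, Finset.mul_sum]
  · refine Finset.sum_congr rfl fun i _ => ?_
    rw [integral_const_mul, intervalIntegral.integral_const_mul, sph_pow e he]
    ring
  · intro i _
    exact Continuous.intervalIntegrable (by fun_prop) _ _
  · intro i _
    exact sph_int (f := fun y => p.coeff i * inner ℝ e y ^ i) (by fun_prop)

lemma sph_mass : sphMeas.real Set.univ = 4 * π := by
  have h := sph_pow (EuclideanSpace.single 0 1) (by simp) 0
  simp at h
  rw [h]; ring

lemma sph_cont (e : EuclideanSpace ℝ (Fin 3)) (he : ‖e‖ = 1) (f : ℝ → ℝ) (hf : Continuous f) :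
    ∫ γ : Metric.sphere (0 : EuclideanSpace ℝ (Fin 3)) 1, f (inner ℝ e (γ : EuclideanSpace ℝ (Fin 3))) ∂sphMeas
      = 2 * π * ∫ u in (-1:ℝ)..1, f u := by
  apply eq_of_abs_sub_le_all
  intro ε hε
  have hπ := Real.pi_pos
  obtain ⟨p, hp⟩ := exists_polynomial_near_of_continuousOn (-1) 1 f hf.continuousOn (ε / (8 * π))
    (by positivity)
  have hpc : Continuous fun u => p.eval u := p.continuous
  have h1 : |∫ γ : Metric.sphere (0 : EuclideanSpace ℝ (Fin 3)) 1,
      (p.eval (inner ℝ e (γ : EuclideanSpace ℝ (Fin 3))) - f (inner ℝ e (γ : EuclideanSpace ℝ (Fin 3)))) ∂sphMeas|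
      ≤ ε / (8 * π) * sphMeas.real Set.univ := by
    rw [← Real.norm_eq_abs]
    refine norm_integral_le_of_norm_le_const (Filter.Eventually.of_forall fun γ => ?_)
    refine (hp _ ?_).le
    have hγ : ‖(γ : EuclideanSpace ℝ (Fin 3))‖ = 1 := by simp
    have := abs_real_inner_le_norm e (γ : EuclideanSpace ℝ (Fin 3))
    rw [he, hγ, one_mul] at this
    exact abs_le.mp this
  have h2 : |∫ u in (-1:ℝ)..1, (p.eval u - f u)| ≤ ε / (8 * π) * |1 - (-1)| := by
    rw [← Real.norm_eq_abs]
    refine intervalIntegral.norm_integral_le_of_norm_le_const fun u hu => ?_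
    rw [Set.uIoc_of_le (by norm_num)] at hu
    exact (hp u ⟨hu.1.le, hu.2⟩).le
  rw [integral_sub (sph_int (f := fun y => p.eval (inner ℝ e y)) (by fun_prop))
    (sph_int (f := fun y => f (inner ℝ e y)) (by fun_prop)), sph_poly e he] at h1
  rw [intervalIntegral.integral_sub (hpc.intervalIntegrable _ _) (hf.intervalIntegrable _ _)] at h2
  rw [sph_mass] at h1
  have e1 : ε / (8 * π) * (4 * π) = ε / 2 := by field_simp; norm_num
  rw [e1] at h1
  have h2' : |2 * π * ((∫ u in (-1:ℝ)..1, p.eval u) - ∫ u in (-1:ℝ)..1, f u)| ≤ ε / 2 := by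
    rw [abs_mul, abs_of_pos (by positivity)]
    refine (mul_le_mul_of_nonneg_left h2 (by positivity)).trans (le_of_eq ?_)
    norm_num
    field_simp
    norm_num
  rw [abs_le] at *
  constructor <;> linarith [h1.1, h1.2, h2'.1, h2'.2]

lemma sph_shift (x : EuclideanSpace ℝ (Fin 3)) (hx : x ≠ 0) (ρ : ℝ) (hρ : 0 < ρ) (h : ℝ → ℝ) (hh : Continuous h) :
    ∫ γ : Metric.sphere (0 : EuclideanSpace ℝ (Fin 3)) 1, h (‖x - ρ • (γ : EuclideanSpace ℝ (Fin 3))‖ ^ 2) ∂sphMeas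
      = π / (‖x‖ * ρ) * ∫ s in ((‖x‖ - ρ) ^ 2)..((‖x‖ + ρ) ^ 2), h s := by
  have hr : 0 < ‖x‖ := norm_pos_iff.mpr hx
  have he : ‖(‖x‖⁻¹ • x)‖ = 1 := by
    rw [norm_smul, norm_inv, norm_norm, inv_mul_cancel₀ hr.ne']
  have h1 := sph_cont (‖x‖⁻¹ • x) he (fun u => h ((‖x‖ ^ 2 + ρ ^ 2) - (2 * ‖x‖ * ρ) * u))
    (by fun_prop)
  have h2 : ∀ γ : Metric.sphere (0 : EuclideanSpace ℝ (Fin 3)) 1, ‖x - ρ • (γ : EuclideanSpace ℝ (Fin 3))‖ ^ 2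
      = (‖x‖ ^ 2 + ρ ^ 2) - (2 * ‖x‖ * ρ) * inner ℝ (‖x‖⁻¹ • x) (γ : EuclideanSpace ℝ (Fin 3)) := by
    intro γ
    have hγ : ‖(γ : EuclideanSpace ℝ (Fin 3))‖ = 1 := by simp
    rw [norm_sub_sq_real, inner_smul_right, inner_smul_left, norm_smul, hγ]
    simp only [Real.norm_eq_abs, mul_one, sq_abs, conj_trivial]
    field_simp
    ring
  simp only [h2]
  rw [h1, intervalIntegral.integral_comp_sub_mul _ (by positivity), smul_eq_mul]
  have e1 : ‖x‖ ^ 2 + ρ ^ 2 - 2 * ‖x‖ * ρ * 1 = (‖x‖ - ρ) ^ 2 := by ring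
  have e2 : ‖x‖ ^ 2 + ρ ^ 2 - 2 * ‖x‖ * ρ * -1 = (‖x‖ + ρ) ^ 2 := by ring
  rw [e1, e2]
  field_simp

lemma main_cont (k : ℝ → ℝ → ℝ) (hk : Continuous (fun s : ℝ × ℝ => k s.1 s.2))
    (x x' : EuclideanSpace ℝ (Fin 3)) (hx : x ≠ 0) (hx' : x' ≠ 0) (ρ ρ' : ℝ) (hρ : 0 < ρ) (hρ' : 0 < ρ') :
    ∫ γ : Metric.sphere (0 : EuclideanSpace ℝ (Fin 3)) 1, (∫ γ' : Metric.sphere (0 : EuclideanSpace ℝ (Fin 3)) 1,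
      k (‖x - ρ • (γ : EuclideanSpace ℝ (Fin 3))‖ ^ 2) (‖x' - ρ' • (γ' : EuclideanSpace ℝ (Fin 3))‖ ^ 2) ∂sphMeas) ∂sphMeas
    = π / (‖x‖ * ρ) * (π / (‖x'‖ * ρ')) *
      ∫ s in ((‖x‖ - ρ) ^ 2)..((‖x‖ + ρ) ^ 2),
        ∫ s' in ((‖x'‖ - ρ') ^ 2)..((‖x'‖ + ρ') ^ 2), k s s' := by
  have hk2 : ∀ s, Continuous (k s) := fun s => hk.comp (by fun_prop : Continuous fun s' => (s, s'))
  have hc : Continuous fun s => ∫ s' in ((‖x'‖ - ρ') ^ 2)..((‖x'‖ + ρ') ^ 2), k s s' :=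
    intervalIntegral.continuous_parametric_intervalIntegral_of_continuous' hk _ _
  simp only [fun s => sph_shift x' hx' ρ' hρ' (k s) (hk2 s)]
  rw [integral_const_mul, sph_shift x hx ρ hρ _ hc]
  ring

/-- explicit convolution-free formula for the double spherical mean of a radially
symmetric kernel, in terms of the double antiderivative `K`. -/
theorem stmt_11 (c : ℝ) (hc : 0 < c) (k₀ : ℝ → ℝ → ℝ)
    (hk₀ : ContinuousOn (fun s : ℝ × ℝ => k₀ s.1 s.2) (Set.Ici 0 ×ˢ Set.Ici 0))
    (K : ℝ → ℝ → ℝ) (hK : ∀ a b, K a b = ∫ s in (0:ℝ)..a, ∫ s' in (0:ℝ)..b, k₀ s s')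
    (x x' : EuclideanSpace ℝ (Fin 3)) (hx : x ≠ 0) (hx' : x' ≠ 0) (t t' : ℝ) :
    (t * t' / (16 * π ^ 2)) *
        ∫ γ : Metric.sphere (0 : EuclideanSpace ℝ (Fin 3)) 1,
          (∫ γ' : Metric.sphere (0 : EuclideanSpace ℝ (Fin 3)) 1,
            k₀ (‖x - (c * |t|) • (γ : EuclideanSpace ℝ (Fin 3))‖ ^ 2)
               (‖x' - (c * |t'|) • (γ' : EuclideanSpace ℝ (Fin 3))‖ ^ 2) ∂sphMeas) ∂sphMeas
      = (Real.sign (t * t') / (16 * c ^ 2 * ‖x‖ * ‖x'‖)) *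
          ∑ ε ∈ ({-1, 1} : Finset ℝ), ∑ ε' ∈ ({-1, 1} : Finset ℝ),
            ε * ε' * K ((‖x‖ + ε * c * |t|) ^ 2) ((‖x'‖ + ε' * c * |t'|) ^ 2) := by
  rcases eq_or_ne t 0 with rfl | ht
  · simp
  rcases eq_or_ne t' 0 with rfl | ht'
  · simp
  have hta : 0 < |t| := abs_pos.mpr ht
  have hta' : 0 < |t'| := abs_pos.mpr ht'
  have hr : 0 < ‖x‖ := norm_pos_iff.mpr hx
  have hr' : 0 < ‖x'‖ := norm_pos_iff.mpr hx'
  obtain ⟨k, hkdef⟩ : ∃ k : ℝ → ℝ → ℝ, k = fun s s' => k₀ (max s 0) (max s' 0) := ⟨_, rfl⟩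
  have hkeq : ∀ s s', 0 ≤ s → 0 ≤ s' → k₀ s s' = k s s' := by
    intro s s' hs hs'
    rw [hkdef]; simp only [max_eq_left hs, max_eq_left hs']
  have hk : Continuous (fun s : ℝ × ℝ => k s.1 s.2) := by
    rw [hkdef]
    exact hk₀.comp_continuous (f := fun s : ℝ × ℝ => (max s.1 0, max s.2 0)) (by fun_prop)
      (fun s => ⟨le_max_right s.1 0, le_max_right s.2 0⟩)
  have hk2 : ∀ s, Continuous (k s) := fun s => hk.comp (by fun_prop : Continuous fun s' => (s, s'))
  have hKk : ∀ a b, 0 ≤ a → 0 ≤ b → K a b = ∫ s in (0:ℝ)..a, ∫ s' in (0:ℝ)..b, k s s' := by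
    intro a b ha hb
    rw [hK]
    refine intervalIntegral.integral_congr fun s hs => ?_
    rw [Set.uIcc_of_le ha] at hs
    refine intervalIntegral.integral_congr fun s' hs' => ?_
    rw [Set.uIcc_of_le hb] at hs'
    exact hkeq s s' hs.1 hs'.1
  have hcont : ∀ a b, Continuous fun s => ∫ s' in a..b, k s s' := fun a b =>
    intervalIntegral.continuous_parametric_intervalIntegral_of_continuous' hk _ _
  have hrect : ∀ a b a' b', 0 ≤ a → 0 ≤ b → 0 ≤ a' → 0 ≤ b' →
      ∫ s in a..b, ∫ s' in a'..b', k s s' = K b b' - K a b' - K b a' + K a a' := by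
    intro a b a' b' ha hb ha' hb'
    rw [hKk b b' hb hb', hKk a b' ha hb', hKk b a' hb ha', hKk a a' ha ha']
    have h1 : ∀ s, ∫ s' in a'..b', k s s'
        = (∫ s' in (0:ℝ)..b', k s s') - ∫ s' in (0:ℝ)..a', k s s' := fun s =>
      (intervalIntegral.integral_interval_sub_left ((hk2 s).intervalIntegrable _ _)
        ((hk2 s).intervalIntegrable _ _)).symm
    simp only [h1]
    rw [intervalIntegral.integral_sub ((hcont _ _).intervalIntegrable _ _)
      ((hcont _ _).intervalIntegrable _ _),
      ← intervalIntegral.integral_interval_sub_left (a := 0) (b := b) (c := a)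
        ((hcont 0 b').intervalIntegrable _ _) ((hcont 0 b').intervalIntegrable _ _),
      ← intervalIntegral.integral_interval_sub_left (a := 0) (b := b) (c := a)
        ((hcont 0 a').intervalIntegrable _ _) ((hcont 0 a').intervalIntegrable _ _)]
    ring
  have hL : ∀ γ γ' : Metric.sphere (0 : EuclideanSpace ℝ (Fin 3)) 1,
      k₀ (‖x - (c * |t|) • (γ : EuclideanSpace ℝ (Fin 3))‖ ^ 2) (‖x' - (c * |t'|) • (γ' : EuclideanSpace ℝ (Fin 3))‖ ^ 2)
      = k (‖x - (c * |t|) • (γ : EuclideanSpace ℝ (Fin 3))‖ ^ 2) (‖x' - (c * |t'|) • (γ' : EuclideanSpace ℝ (Fin 3))‖ ^ 2) :=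
    fun γ γ' => hkeq _ _ (sq_nonneg _) (sq_nonneg _)
  simp only [hL]
  rw [main_cont k hk x x' hx hx' _ _ (by positivity) (by positivity),
    hrect _ _ _ _ (sq_nonneg _) (sq_nonneg _) (sq_nonneg _) (sq_nonneg _)]
  have hne : (-1:ℝ) ≠ 1 := by norm_num
  rw [Finset.sum_pair hne, Finset.sum_pair hne, Finset.sum_pair hne]
  have e1 : ‖x‖ + -1 * c * |t| = ‖x‖ - c * |t| := by ring
  have e2 : ‖x'‖ + -1 * c * |t'| = ‖x'‖ - c * |t'| := by ring
  have e3 : ‖x‖ + 1 * c * |t| = ‖x‖ + c * |t| := by ring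
  have e4 : ‖x'‖ + 1 * c * |t'| = ‖x'‖ + c * |t'| := by ring
  rw [e1, e2, e3, e4]
  have hs : t * t' = Real.sign (t * t') * (|t| * |t'|) := by
    rw [← abs_mul]
    rcases lt_or_gt_of_ne (mul_ne_zero ht ht') with h | h
    · rw [Real.sign_of_neg h, abs_of_neg h]; ring
    · rw [Real.sign_of_pos h, abs_of_pos h]; ring
  generalize Real.sign (t * t') = σ at *
  rw [hs]
  have hπ := Real.pi_pos
  field_simp
  ring
end

section
/- Let c > 0, R > 0, let k⁰ : [0,∞) × [0,∞) → ℝ be continuous, and let K(a,b) = ∫₀^a ∫₀^b k⁰(s,s') ds' ds. Then for all x, x' ∈ ℝ³ with x ≠ 0 and x' ≠ 0, writing r = |x| and r' = |x'|, and for all t, t' ∈ ℝ: (t t' / (16π²)) ∫_{S²} ∫_{S²} k⁰( |x − c|t|γ|², |x' − c|t'|γ'|² ) · 1_{[0,R]}(|x − c|t|γ|) · 1_{[0,R]}(|x' − c|t'|γ'|) dσ_{S²}(γ) dσ_{S²}(γ') = (sgn(t t') / (16 c² r r')) · Σ_{ε,ε' ∈ {−1,1}} ε ε' K( min((r + ε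 c|t|)², R²), min((r' + ε' c|t'|)², R²) ). -/
open MeasureTheory Real

open scoped ENNReal

lemma planar_lint (G : ℝ → ℝ≥0∞) (hG : Measurable G) :
    ∫⁻ q : ℝ × ℝ, G (q.1 ^ 2 + q.2 ^ 2)
      = ENNReal.ofReal (2 * π) * ∫⁻ ρ in Set.Ioi (0:ℝ), ENNReal.ofReal ρ * G (ρ ^ 2) := by
  rw [← lintegral_comp_polarCoord_symm, polarCoord_target]
  have h1 : ∀ p : ℝ × ℝ, ENNReal.ofReal p.1 • G ((polarCoord.symm p).1 ^ 2 + (polarCoord.symm p).2 ^ 2)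
      = (ENNReal.ofReal p.1 * G (p.1 ^ 2)) * (1 : ℝ≥0∞) := by
    intro p
    simp only [polarCoord_symm_apply, smul_eq_mul, mul_one]
    congr 2
    nlinarith [Real.sin_sq_add_cos_sq p.2]
  simp_rw [h1]
  rw [Measure.volume_eq_prod, ← Measure.prod_restrict,
    lintegral_prod_mul (f := fun r : ℝ => ENNReal.ofReal r * G (r ^ 2)) (g := fun _ : ℝ => 1)
      (by fun_prop) (by fun_prop)]
  simp only [lintegral_const, one_mul, Measure.restrict_apply MeasurableSet.univ, Set.univ_inter,
    Real.volume_Ioo]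
  rw [mul_comm]
  congr 2
  ring

lemma cyl_lint (F : ℝ × ℝ → ℝ≥0∞) (hF : Measurable F) :
    ∫⁻ y : EuclideanSpace ℝ (Fin 3), F (y 0, y 1 ^ 2 + y 2 ^ 2)
      = ENNReal.ofReal (2 * π) * ∫⁻ p : ℝ × ℝ,
          Set.indicator (Set.Ioi (0:ℝ)) (fun ρ => ENNReal.ofReal ρ * F (p.1, ρ ^ 2)) p.2 := by
  have e1 := (PiLp.volume_preserving_ofLp (Fin 3))
  have e2 := (volume_preserving_piFinSuccAbove (fun _ : Fin 3 => ℝ) 0)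
  have e3 := (MeasurePreserving.id (volume : Measure ℝ)).prod (volume_preserving_finTwoArrow ℝ)
  have e := (e3.comp e2).comp e1
  have hm : Measurable (fun q : ℝ × ℝ × ℝ => F (q.1, q.2.1 ^ 2 + q.2.2 ^ 2)) := by fun_prop
  have h := e.lintegral_comp hm
  have h0 : ∫⁻ y : EuclideanSpace ℝ (Fin 3), F (y 0, y 1 ^ 2 + y 2 ^ 2) =
      ∫⁻ q : ℝ × ℝ × ℝ, F (q.1, q.2.1 ^ 2 + q.2.2 ^ 2) := by
    exact h
  rw [h0, Measure.volume_eq_prod, lintegral_prod _ hm.aemeasurable]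
  have h2 : Measurable (fun p : ℝ × ℝ => 
          Set.indicator (Set.Ioi (0:ℝ)) (fun ρ => ENNReal.ofReal ρ * F (p.1, ρ ^ 2)) p.2) := by
    have : (fun p : ℝ × ℝ => 
          Set.indicator (Set.Ioi (0:ℝ)) (fun ρ => ENNReal.ofReal ρ * F (p.1, ρ ^ 2)) p.2) = 
        Set.indicator {p : ℝ × ℝ | 0 < p.2} (fun p => ENNReal.ofReal p.2 * F (p.1, p.2 ^ 2)) := by
      ext p; simp [Set.indicator]
    rw [this]
    exact Measurable.indicator (by fun_prop) (measurableSet_lt measurable_const measurable_snd)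
  rw [Measure.volume_eq_prod, lintegral_prod _ h2.aemeasurable,
    ← lintegral_const_mul _ h2.lintegral_prod_right']
  refine lintegral_congr fun z => ?_
  simp only
  rw [lintegral_indicator measurableSet_Ioi]
  exact planar_lint (fun u => F (z, u)) (by fun_prop)

lemma theta_lint (S : Set ℝ) (hS : MeasurableSet S) :
    ∫⁻ θ in Set.Ioo (-π) π, ENNReal.ofReal (Real.sin θ) * S.indicator 1 (Real.cos θ)
      = volume (S ∩ Set.Icc (-1) 1) := by
  have h := lintegral_image_eq_lintegral_abs_deriv_mul (s := Set.Icc 0 π) (f := Real.cos)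
    (f' := fun x => - Real.sin x) measurableSet_Icc
    (fun x _ => (Real.hasDerivAt_cos x).hasDerivWithinAt) Real.injOn_cos (S.indicator 1)
  rw [Real.bijOn_cos.image_eq, lintegral_indicator_one hS, Measure.restrict_apply hS] at h
  rw [h, ← lintegral_indicator measurableSet_Ioo, ← lintegral_indicator measurableSet_Icc]
  have hpi : ∀ᵐ θ : ℝ, θ ≠ π := by simp [ae_iff]
  refine lintegral_congr_ae ?_
  filter_upwards [hpi] with θ hθ
  by_cases h1 : θ ∈ Set.Icc 0 π
  · have h2 : θ ∈ Set.Ioo (-π) π := ⟨by linarith [h1.1, Real.pi_pos], lt_of_le_of_ne h1.2 hθ⟩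
    rw [Set.indicator_of_mem h1, Set.indicator_of_mem h2, abs_neg,
      abs_of_nonneg (Real.sin_nonneg_of_mem_Icc h1)]
  · rw [Set.indicator_of_notMem h1]
    by_cases h2 : θ ∈ Set.Ioo (-π) π
    · have : θ < 0 := by
        by_contra h3
        exact h1 ⟨not_lt.1 h3, h2.2.le⟩
      rw [Set.indicator_of_mem h2, ENNReal.ofReal_of_nonpos, zero_mul]
      exact Real.sin_nonpos_of_nonpos_of_neg_pi_le this.le h2.1.le
    · rw [Set.indicator_of_notMem h2]

lemma sq_lint : ∫⁻ s in Set.Ioi (0:ℝ), ENNReal.ofReal (s ^ 2) * (Set.Iio (1:ℝ)).indicator 1 s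
    = ENNReal.ofReal (1 / 3) := by
  have : ∀ s : ℝ, ENNReal.ofReal (s ^ 2) * (Set.Iio (1:ℝ)).indicator 1 s
     = (Set.Iio (1:ℝ)).indicator (fun s => ENNReal.ofReal (s ^ 2)) s := by
    intro s; by_cases h : s ∈ Set.Iio (1:ℝ) <;> simp [Set.indicator]
  simp_rw [this]
  rw [setLIntegral_indicator measurableSet_Iio, Set.inter_comm, Set.Ioi_inter_Iio,
    ← ofReal_integral_eq_lintegral_ofReal, ← integral_Ioc_eq_integral_Ioo,
    ← intervalIntegral.integral_of_le zero_le_one]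
  · norm_num
  · exact ((continuous_pow 2).integrableOn_Icc (a := 0) (b := 1)).mono_set Set.Ioo_subset_Icc_self
  · exact Filter.Eventually.of_forall fun s => sq_nonneg s

lemma cone_vol (S : Set ℝ) (hS : MeasurableSet S) :
    (volume : Measure (EuclideanSpace ℝ (Fin 3))) {y | 0 < ‖y‖ ∧ ‖y‖ < 1 ∧ y 0 / ‖y‖ ∈ S}
      = ENNReal.ofReal (2 * π / 3) * volume (S ∩ Set.Icc (-1) 1) := by
  set A : Set (ℝ × ℝ) := {q | 0 < √(q.1 ^ 2 + q.2) ∧ √(q.1 ^ 2 + q.2) < 1 ∧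
    q.1 / √(q.1 ^ 2 + q.2) ∈ S} with hA
  have hAm : MeasurableSet A := by
    refine MeasurableSet.inter
      (measurableSet_lt (f := fun _ => (0:ℝ)) (g := fun q : ℝ × ℝ => √(q.1 ^ 2 + q.2))
        (by fun_prop) (by fun_prop))
      (MeasurableSet.inter
        (measurableSet_lt (f := fun q : ℝ × ℝ => √(q.1 ^ 2 + q.2)) (g := fun _ => (1:ℝ))
          (by fun_prop) (by fun_prop)) ?_)
    exact measurableSet_preimage (f := fun q : ℝ × ℝ => q.1 / √(q.1 ^ 2 + q.2)) (by fun_prop) hS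
  have hset : {y : EuclideanSpace ℝ (Fin 3) | 0 < ‖y‖ ∧ ‖y‖ < 1 ∧ y 0 / ‖y‖ ∈ S}
      = (fun y : EuclideanSpace ℝ (Fin 3) => (y 0, y 1 ^ 2 + y 2 ^ 2)) ⁻¹' A := by
    ext y
    have : ‖y‖ = √(y 0 ^ 2 + (y 1 ^ 2 + y 2 ^ 2)) := by
      rw [EuclideanSpace.norm_eq, Fin.sum_univ_three]
      simp [add_assoc]
    simp only [Set.mem_ofPred_eq, Set.mem_preimage, hA, this]
  have hmm : Measurable (fun y : EuclideanSpace ℝ (Fin 3) => (y 0, y 1 ^ 2 + y 2 ^ 2)) := by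
    fun_prop
  rw [hset, ← lintegral_indicator_one (hmm hAm)]
  have := cyl_lint (A.indicator 1) (measurable_one.indicator hAm)
  have h1 : ∀ y : EuclideanSpace ℝ (Fin 3), ((fun y : EuclideanSpace ℝ (Fin 3) =>
      (y 0, y 1 ^ 2 + y 2 ^ 2)) ⁻¹' A).indicator (1 : EuclideanSpace ℝ (Fin 3) → ℝ≥0∞) y
        = A.indicator 1 (y 0, y 1 ^ 2 + y 2 ^ 2) := by
    intro y; rfl
  simp_rw [h1]
  rw [this, ← lintegral_comp_polarCoord_symm, polarCoord_target]
  have h2 : ∫⁻ p in Set.Ioi (0:ℝ) ×ˢ Set.Ioo (-π) π, ENNReal.ofReal p.1 •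
      (Set.Ioi (0:ℝ)).indicator (fun ρ => ENNReal.ofReal ρ *
        A.indicator (1 : ℝ × ℝ → ℝ≥0∞) ((polarCoord.symm p).1, ρ ^ 2)) (polarCoord.symm p).2
      = ∫⁻ p in Set.Ioi (0:ℝ) ×ˢ Set.Ioo (-π) π,
        (ENNReal.ofReal (p.1 ^ 2) * (Set.Iio (1:ℝ)).indicator 1 p.1) *
        (ENNReal.ofReal (Real.sin p.2) * S.indicator 1 (Real.cos p.2)) := by
    refine setLIntegral_congr_fun (measurableSet_Ioi.prod measurableSet_Ioo) ?_
    rintro ⟨s, θ⟩ ⟨hs, hθ⟩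
    simp only [Set.mem_Ioi] at hs
    simp only [polarCoord_symm_apply, smul_eq_mul]
    have hsq : √((s * Real.cos θ) ^ 2 + (s * Real.sin θ) ^ 2) = s := by
      have : (s * Real.cos θ) ^ 2 + (s * Real.sin θ) ^ 2 = s ^ 2 := by
        nlinarith [Real.sin_sq_add_cos_sq θ]
      rw [this, Real.sqrt_sq hs.le]
    by_cases hsin : 0 < Real.sin θ
    · have hpos : s * Real.sin θ ∈ Set.Ioi (0:ℝ) := mul_pos hs hsin
      rw [Set.indicator_of_mem hpos]
      have : A.indicator (1 : ℝ × ℝ → ℝ≥0∞) (s * Real.cos θ, (s * Real.sin θ) ^ 2)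
          = (Set.Iio (1:ℝ)).indicator 1 s * S.indicator 1 (Real.cos θ) := by
        have hiff : (s * Real.cos θ, (s * Real.sin θ) ^ 2) ∈ A ↔ s < 1 ∧ Real.cos θ ∈ S := by
          simp only [hA, Set.mem_ofPred_eq, hsq, hs, true_and]
          rw [mul_div_cancel_left₀ _ hs.ne']
        by_cases ha : s < 1 <;> by_cases hb : Real.cos θ ∈ S <;>
          simp [Set.indicator, hiff, ha, hb]
      rw [this, ENNReal.ofReal_mul hs.le, pow_two, ENNReal.ofReal_mul hs.le]
      ring
    · have hpos : s * Real.sin θ ∉ Set.Ioi (0:ℝ) := by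
        simp only [Set.mem_Ioi, not_lt]
        exact mul_nonpos_of_nonneg_of_nonpos hs.le (not_lt.1 hsin)
      rw [Set.indicator_of_notMem hpos, ENNReal.ofReal_of_nonpos (not_lt.1 hsin)]
      simp
  rw [h2, Measure.volume_eq_prod, ← Measure.prod_restrict,
    lintegral_prod_mul (f := fun s : ℝ => ENNReal.ofReal (s ^ 2) * (Set.Iio (1:ℝ)).indicator 1 s)
      (g := fun θ : ℝ => ENNReal.ofReal (Real.sin θ) * S.indicator 1 (Real.cos θ)),
    sq_lint, theta_lint S hS, ← mul_assoc, ← ENNReal.ofReal_mul (by positivity)]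
  · congr 2; ring
  · exact (Measurable.mul (by fun_prop) (measurable_one.indicator measurableSet_Iio)).aemeasurable
  · exact (Measurable.mul (by fun_prop)
      ((measurable_one.indicator hS).comp Real.measurable_cos)).aemeasurable

open scoped Pointwise in
lemma arch (e : EuclideanSpace ℝ (Fin 3)) (he : ‖e‖ = 1) :
    sphMeas.map (fun γ : Metric.sphere (0 : EuclideanSpace ℝ (Fin 3)) 1 => inner ℝ e (γ : EuclideanSpace ℝ (Fin 3)))
      = ENNReal.ofReal (2 * π) • volume.restrict (Set.Icc (-1) 1) := by
  have hm : Measurable (fun γ : Metric.sphere (0 : EuclideanSpace ℝ (Fin 3)) 1 =>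
      inner ℝ e (γ : EuclideanSpace ℝ (Fin 3))) := by fun_prop
  ext S hS
  rw [Measure.map_apply hm hS, sphMeas, Measure.toSphere_apply' _ (hm hS)]
  obtain ⟨b, hb⟩ := Orthonormal.exists_orthonormalBasis_extension_of_card_eq (𝕜 := ℝ)
    (E := EuclideanSpace ℝ (Fin 3)) (ι := Fin 3) (by simp) (v := fun _ => e) (s := {0}) (by
      constructor
      · intro i; simpa using he
      · intro i j hij
        exact absurd (Subsingleton.elim i j) hij)
  have hb0 : b 0 = e := hb 0 rfl
  have hset : Set.Ioo (0:ℝ) 1 • (Subtype.val '' ((fun γ : Metric.sphere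
      (0 : EuclideanSpace ℝ (Fin 3)) 1 => inner ℝ e (γ : EuclideanSpace ℝ (Fin 3))) ⁻¹' S))
      = b.repr ⁻¹' {y | 0 < ‖y‖ ∧ ‖y‖ < 1 ∧ y 0 / ‖y‖ ∈ S} := by
    ext y
    simp only [Set.mem_preimage, Set.mem_ofPred_eq, LinearIsometryEquiv.norm_map,
      OrthonormalBasis.repr_apply_apply, hb0]
    constructor
    · rintro ⟨s, hs, _, ⟨γ, hγ, rfl⟩, rfl⟩
      have hγ1 : ‖(γ : EuclideanSpace ℝ (Fin 3))‖ = 1 := by simp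
      simp only [norm_smul, hγ1, mul_one, Real.norm_eq_abs, abs_of_pos hs.1, inner_smul_right]
      refine ⟨hs.1, hs.2, ?_⟩
      rw [mul_div_cancel_left₀ _ hs.1.ne']
      exact hγ
    · rintro ⟨h0, h1, h2⟩
      refine Set.mem_smul.2 ⟨‖y‖, ⟨h0, h1⟩, ‖y‖⁻¹ • y, ⟨⟨‖y‖⁻¹ • y, ?_⟩, ?_, rfl⟩, ?_⟩
      · simp [norm_smul, h0.ne']
      · simp only [Set.mem_preimage, inner_smul_right]
        rwa [div_eq_inv_mul] at h2
      · simp [smul_smul, h0.ne']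
  have hcm : MeasurableSet {y : EuclideanSpace ℝ (Fin 3) | 0 < ‖y‖ ∧ ‖y‖ < 1 ∧ y 0 / ‖y‖ ∈ S} := by
    refine MeasurableSet.inter
      (measurableSet_lt (f := fun _ => (0:ℝ)) (g := fun y : EuclideanSpace ℝ (Fin 3) => ‖y‖)
        (by fun_prop) (by fun_prop))
      (MeasurableSet.inter
        (measurableSet_lt (f := fun y : EuclideanSpace ℝ (Fin 3) => ‖y‖) (g := fun _ => (1:ℝ))
          (by fun_prop) (by fun_prop)) ?_)
    exact measurableSet_preimage (f := fun y : EuclideanSpace ℝ (Fin 3) => y 0 / ‖y‖)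
      (by fun_prop) hS
  rw [hset, b.measurePreserving_repr.measure_preimage hcm.nullMeasurableSet, cone_vol S hS]
  rw [Measure.smul_apply, Measure.restrict_apply hS, smul_eq_mul, ← mul_assoc]
  congr 1
  simp only [finrank_euclideanSpace, Fintype.card_fin]
  rw [show ((3:ℕ):ℝ≥0∞) = ENNReal.ofReal 3 by simp, ← ENNReal.ofReal_mul (by norm_num)]
  congr 1; ring

lemma trunc_int (h : ℝ → ℝ) (hh : Continuous h) (a b M : ℝ) (hab : a ≤ b) :
    ∫ s in a..b, (Set.Iic M).indicator h s
      = (∫ s in (0:ℝ)..(min b M), h s) - ∫ s in (0:ℝ)..(min a M), h s := by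
  rw [intervalIntegral.integral_interval_sub_left (hh.intervalIntegrable _ _)
    (hh.intervalIntegrable _ _), intervalIntegral.integral_of_le hab,
    intervalIntegral.integral_of_le (min_le_min_right M hab),
    setIntegral_indicator measurableSet_Iic]
  have : Set.Ioc a b ∩ Set.Iic M = Set.Ioc (min a M) (min b M) := by
    ext s
    simp only [Set.mem_inter_iff, Set.mem_Ioc, Set.mem_Iic, min_lt_iff, le_min_iff]
    constructor
    · rintro ⟨⟨h1, h2⟩, h3⟩; exact ⟨Or.inl h1, h2, h3⟩
    · rintro ⟨h1 | h1, h2, h3⟩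
      · exact ⟨⟨h1, h2⟩, h3⟩
      · exact absurd h3 (not_le.2 h1)
  rw [this]

lemma sph_int_s13 (h : ℝ → ℝ) (hh : Continuous h) (R : ℝ) (hR : 0 < R) (ρ : ℝ) (hρ : 0 < ρ)
    (x : EuclideanSpace ℝ (Fin 3)) (hx : x ≠ 0) :
    ∫ γ : Metric.sphere (0 : EuclideanSpace ℝ (Fin 3)) 1,
        h (‖x - ρ • (γ : EuclideanSpace ℝ (Fin 3))‖ ^ 2)
          * Set.indicator (Set.Icc (0:ℝ) R) 1 ‖x - ρ • (γ : EuclideanSpace ℝ (Fin 3))‖ ∂sphMeas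
      = π / (ρ * ‖x‖) * ((∫ s in (0:ℝ)..(min ((‖x‖ + ρ) ^ 2) (R ^ 2)), h s)
          - ∫ s in (0:ℝ)..(min ((‖x‖ - ρ) ^ 2) (R ^ 2)), h s) := by
  have hr : 0 < ‖x‖ := norm_pos_iff.2 hx
  set r := ‖x‖ with hrdef
  set e : EuclideanSpace ℝ (Fin 3) := r⁻¹ • x with he
  have he1 : ‖e‖ = 1 := by
    rw [he, norm_smul, norm_inv, Real.norm_eq_abs, abs_of_pos hr, ← hrdef, inv_mul_cancel₀ hr.ne']
  set g : ℝ → ℝ := (Set.Iic (R ^ 2)).indicator h with hg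
  have hgm : Measurable g := hh.measurable.indicator measurableSet_Iic
  have hpt : ∀ γ : Metric.sphere (0 : EuclideanSpace ℝ (Fin 3)) 1,
      h (‖x - ρ • (γ : EuclideanSpace ℝ (Fin 3))‖ ^ 2)
          * Set.indicator (Set.Icc (0:ℝ) R) 1 ‖x - ρ • (γ : EuclideanSpace ℝ (Fin 3))‖
      = (fun u => g ((r ^ 2 + ρ ^ 2) - (2 * ρ * r) * u))
        (inner ℝ e (γ : EuclideanSpace ℝ (Fin 3))) := by
    intro γ
    have hγ1 : ‖(γ : EuclideanSpace ℝ (Fin 3))‖ = 1 := by simp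
    have hn : ‖x - ρ • (γ : EuclideanSpace ℝ (Fin 3))‖ ^ 2
        = (r ^ 2 + ρ ^ 2) - (2 * ρ * r) * inner ℝ e (γ : EuclideanSpace ℝ (Fin 3)) := by
      rw [norm_sub_sq_real, norm_smul, hγ1, he, inner_smul_right, real_inner_smul_left,
        Real.norm_eq_abs, mul_one, sq_abs, ← hrdef]
      field_simp
      ring
    simp only [← hn, hg]
    have hiff : ‖x - ρ • (γ : EuclideanSpace ℝ (Fin 3))‖ ∈ Set.Icc 0 R ↔
        ‖x - ρ • (γ : EuclideanSpace ℝ (Fin 3))‖ ^ 2 ∈ Set.Iic (R ^ 2) := by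
      simp only [Set.mem_Icc, norm_nonneg, true_and, Set.mem_Iic]
      exact (pow_le_pow_iff_left₀ (norm_nonneg _) hR.le two_ne_zero).symm
    by_cases hc : ‖x - ρ • (γ : EuclideanSpace ℝ (Fin 3))‖ ∈ Set.Icc 0 R
    · rw [Set.indicator_of_mem hc, Set.indicator_of_mem (hiff.1 hc)]; simp
    · rw [Set.indicator_of_notMem hc, Set.indicator_of_notMem (fun hh => hc (hiff.2 hh))]; simp
  simp_rw [hpt]
  have hm : Measurable (fun γ : Metric.sphere (0 : EuclideanSpace ℝ (Fin 3)) 1 =>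
      inner ℝ e (γ : EuclideanSpace ℝ (Fin 3))) := by fun_prop
  rw [← integral_map (φ := fun γ : Metric.sphere (0 : EuclideanSpace ℝ (Fin 3)) 1 =>
      inner ℝ e (γ : EuclideanSpace ℝ (Fin 3))) hm.aemeasurable
      (f := fun u => g ((r ^ 2 + ρ ^ 2) - (2 * ρ * r) * u))
      (Measurable.aestronglyMeasurable (by fun_prop)), arch e he1, integral_smul_measure,
    integral_Icc_eq_integral_Ioc, ← intervalIntegral.integral_of_le (by norm_num),
    intervalIntegral.integral_comp_sub_mul g (by positivity),
    ENNReal.toReal_ofReal (by positivity)]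
  rw [show r ^ 2 + ρ ^ 2 - 2 * ρ * r * 1 = (r - ρ) ^ 2 by ring,
    show r ^ 2 + ρ ^ 2 - 2 * ρ * r * (-1) = (r + ρ) ^ 2 by ring,
    trunc_int h hh _ _ _ (by nlinarith [mul_pos hr hρ])]
  simp only [smul_eq_mul]
  field_simp

lemma stmt_cont (c : ℝ) (hc : 0 < c) (R : ℝ) (hR : 0 < R) (k₀ : ℝ → ℝ → ℝ)
    (hk : Continuous (fun s : ℝ × ℝ => k₀ s.1 s.2))
    (x x' : EuclideanSpace ℝ (Fin 3)) (hx : x ≠ 0) (hx' : x' ≠ 0) (t t' : ℝ) :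
    (t * t' / (16 * π ^ 2)) *
        ∫ γ : Metric.sphere (0 : EuclideanSpace ℝ (Fin 3)) 1,
          (∫ γ' : Metric.sphere (0 : EuclideanSpace ℝ (Fin 3)) 1,
            k₀ (‖x - (c * |t|) • (γ : EuclideanSpace ℝ (Fin 3))‖ ^ 2)
               (‖x' - (c * |t'|) • (γ' : EuclideanSpace ℝ (Fin 3))‖ ^ 2)
            * Set.indicator (Set.Icc (0:ℝ) R) 1 ‖x - (c * |t|) • (γ : EuclideanSpace ℝ (Fin 3))‖
            * Set.indicator (Set.Icc (0:ℝ) R) 1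
                ‖x' - (c * |t'|) • (γ' : EuclideanSpace ℝ (Fin 3))‖ ∂sphMeas) ∂sphMeas
      = (Real.sign (t * t') / (16 * c ^ 2 * ‖x‖ * ‖x'‖)) *
          ∑ ε ∈ ({-1, 1} : Finset ℝ), ∑ ε' ∈ ({-1, 1} : Finset ℝ),
            ε * ε' * ∫ s in (0:ℝ)..(min ((‖x‖ + ε * c * |t|) ^ 2) (R ^ 2)),
               ∫ s' in (0:ℝ)..(min ((‖x'‖ + ε' * c * |t'|) ^ 2) (R ^ 2)), k₀ s s' := by
  rcases eq_or_ne t 0 with rfl | ht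
  · simp
  rcases eq_or_ne t' 0 with rfl | ht'
  · simp
  have hta : 0 < |t| := abs_pos.2 ht
  have hta' : 0 < |t'| := abs_pos.2 ht'
  have hr : 0 < ‖x‖ := norm_pos_iff.2 hx
  have hr' : 0 < ‖x'‖ := norm_pos_iff.2 hx'
  have hks : ∀ s, Continuous (k₀ s) := fun s => hk.comp (Continuous.prodMk_right s)
  have hP : ∀ b : ℝ, Continuous (fun s => ∫ s' in (0:ℝ)..b, k₀ s s') := fun b =>
    intervalIntegral.continuous_parametric_intervalIntegral_of_continuous' hk 0 b
  set bp := min ((‖x'‖ + c * |t'|) ^ 2) (R ^ 2) with hbp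
  set bm := min ((‖x'‖ - c * |t'|) ^ 2) (R ^ 2) with hbm
  have hinner : ∀ γ : Metric.sphere (0 : EuclideanSpace ℝ (Fin 3)) 1,
      (∫ γ' : Metric.sphere (0 : EuclideanSpace ℝ (Fin 3)) 1,
            k₀ (‖x - (c * |t|) • (γ : EuclideanSpace ℝ (Fin 3))‖ ^ 2)
               (‖x' - (c * |t'|) • (γ' : EuclideanSpace ℝ (Fin 3))‖ ^ 2)
            * Set.indicator (Set.Icc (0:ℝ) R) 1 ‖x - (c * |t|) • (γ : EuclideanSpace ℝ (Fin 3))‖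
            * Set.indicator (Set.Icc (0:ℝ) R) 1
                ‖x' - (c * |t'|) • (γ' : EuclideanSpace ℝ (Fin 3))‖ ∂sphMeas)
      = π / (c * |t'| * ‖x'‖) * ((fun s => (∫ s' in (0:ℝ)..bp, k₀ s s') -
          ∫ s' in (0:ℝ)..bm, k₀ s s') (‖x - (c * |t|) • (γ : EuclideanSpace ℝ (Fin 3))‖ ^ 2) *
          Set.indicator (Set.Icc (0:ℝ) R) 1 ‖x - (c * |t|) • (γ : EuclideanSpace ℝ (Fin 3))‖) := by
    intro γ
    have := sph_int_s13 (k₀ (‖x - (c * |t|) • (γ : EuclideanSpace ℝ (Fin 3))‖ ^ 2)) (hks _) R hR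
      (c * |t'|) (by positivity) x' hx'
    simp only [mul_right_comm _ (Set.indicator (Set.Icc (0:ℝ) R) (1 : ℝ → ℝ)
      ‖x - (c * |t|) • (γ : EuclideanSpace ℝ (Fin 3))‖) _]
    rw [integral_mul_const, this]
    ring
  simp_rw [hinner]
  rw [integral_const_mul, sph_int_s13 (fun s => (∫ s' in (0:ℝ)..bp, k₀ s s') -
          ∫ s' in (0:ℝ)..bm, k₀ s s') ((hP _).sub (hP _)) R hR (c * |t|) (by positivity) x hx,
    intervalIntegral.integral_sub ((hP _).intervalIntegrable _ _) ((hP _).intervalIntegrable _ _),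
    intervalIntegral.integral_sub ((hP _).intervalIntegrable _ _) ((hP _).intervalIntegrable _ _)]
  rw [Finset.sum_pair (by norm_num), Finset.sum_pair (by norm_num), Finset.sum_pair (by norm_num)]
  simp only [one_mul, neg_mul, ← sub_eq_add_neg, mul_neg, neg_neg, ← hbp, ← hbm]
  have hsg : Real.sign (t * t') = t * t' / (|t| * |t'|) := by
    rw [← abs_mul]
    rcases lt_or_gt_of_ne (mul_ne_zero ht ht') with h | h
    · rw [Real.sign_of_neg h, abs_of_neg h, div_neg, div_self h.ne]
    · rw [Real.sign_of_pos h, abs_of_pos h, div_self h.ne']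
  rw [hsg]
  field_simp
  ring

/-- convolution-free formula for the double spherical mean of a truncated radially
symmetric kernel, in terms of `K(min(·, R²), min(·, R²))`. -/
theorem stmt_13 (c : ℝ) (hc : 0 < c) (R : ℝ) (hR : 0 < R) (k₀ : ℝ → ℝ → ℝ)
    (hk₀ : ContinuousOn (fun s : ℝ × ℝ => k₀ s.1 s.2) (Set.Ici 0 ×ˢ Set.Ici 0))
    (K : ℝ → ℝ → ℝ) (hK : ∀ a b, K a b = ∫ s in (0:ℝ)..a, ∫ s' in (0:ℝ)..b, k₀ s s')
    (x x' : EuclideanSpace ℝ (Fin 3)) (hx : x ≠ 0) (hx' : x' ≠ 0) (t t' : ℝ) :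
    (t * t' / (16 * π ^ 2)) *
        ∫ γ : Metric.sphere (0 : EuclideanSpace ℝ (Fin 3)) 1,
          (∫ γ' : Metric.sphere (0 : EuclideanSpace ℝ (Fin 3)) 1,
            k₀ (‖x - (c * |t|) • (γ : EuclideanSpace ℝ (Fin 3))‖ ^ 2)
               (‖x' - (c * |t'|) • (γ' : EuclideanSpace ℝ (Fin 3))‖ ^ 2)
            * Set.indicator (Set.Icc (0:ℝ) R) 1 ‖x - (c * |t|) • (γ : EuclideanSpace ℝ (Fin 3))‖
            * Set.indicator (Set.Icc (0:ℝ) R) 1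
                ‖x' - (c * |t'|) • (γ' : EuclideanSpace ℝ (Fin 3))‖ ∂sphMeas) ∂sphMeas
      = (Real.sign (t * t') / (16 * c ^ 2 * ‖x‖ * ‖x'‖)) *
          ∑ ε ∈ ({-1, 1} : Finset ℝ), ∑ ε' ∈ ({-1, 1} : Finset ℝ),
            ε * ε' * K (min ((‖x‖ + ε * c * |t|) ^ 2) (R ^ 2))
                       (min ((‖x'‖ + ε' * c * |t'|) ^ 2) (R ^ 2)) := by
  have hpos : ∀ s s' : ℝ, 0 ≤ s → 0 ≤ s' → k₀ s s' = k₀ (max s 0) (max s' 0) := by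
    intro s s' h h'
    rw [max_eq_left h, max_eq_left h']
  have hcont : Continuous (fun s : ℝ × ℝ => k₀ (max s.1 0) (max s.2 0)) :=
    hk₀.comp_continuous (f := fun s : ℝ × ℝ => (max s.1 0, max s.2 0)) (by fun_prop)
      (fun s => Set.mk_mem_prod (Set.mem_Ici.2 (le_max_right _ _)) (Set.mem_Ici.2 (le_max_right _ _)))
  have main := stmt_cont c hc R hR (fun s s' => k₀ (max s 0) (max s' 0)) hcont x x' hx hx' t t'
  have hKK : ∀ a b, 0 ≤ a → 0 ≤ b → K a b
      = ∫ s in (0:ℝ)..a, ∫ s' in (0:ℝ)..b, k₀ (max s 0) (max s' 0) := by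
    intro a b ha hb
    rw [hK]
    refine intervalIntegral.integral_congr fun s hs => ?_
    refine intervalIntegral.integral_congr fun s' hs' => ?_
    rw [Set.uIcc_of_le ha] at hs
    rw [Set.uIcc_of_le hb] at hs'
    exact hpos s s' hs.1 hs'.1
  have hmin : ∀ u : ℝ, 0 ≤ min (u ^ 2) (R ^ 2) := fun u => le_min (sq_nonneg _) (sq_nonneg _)
  simp only [max_eq_left (sq_nonneg _)] at main
  rw [main]
  congr 1
  refine Finset.sum_congr rfl fun ε _ => Finset.sum_congr rfl fun ε' _ => ?_
  rw [hKK _ _ (hmin _) (hmin _)]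
end
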